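/- arXiv:2011.01610 — 8 statements merged into one kernel-verified Lean document; each statement's English description precedes it below -/
import Mathlib

section
/- Let β > 1, m > 0, and let X be a random variable distributed on ℝ₊ with the inverse Gamma density h_{β,m}(x) = C_{β,m} x^{−2β} e^{−m/x}. Then for every α with 1 < α ≤ 3/2 and α < β, and every bounded smooth function φ on ℝ₊ such that Ent[φ²(X)] is finite, Ent[φ²(X)] ≤ (2/ρ_{β,α,m}) E[X^{2α} (φ'(X))²], where ρ_{β,α,m} = (1/2)((2β−α)/(3/2−α))^{3−2α} (m(2−α))^{2α−2} (α−1)^{5−4α} for 1 < α < 3/2, and ρ_{β,α,m} = m/2 for α = 3/2 (this case requiring β > 3/2). -/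
open MeasureTheory Set

lemma exists_transport (a b : ℝ) (g1 g2 : ℝ → ℝ) (c1 : Continuous g1) (c2 : Continuous g2)
    (δ : ℝ) (hδ : 0 < δ) (p2 : ∀ x, δ ≤ g2 x)
    (h : ∫ x in a..b, g1 x = ∫ x in a..b, g2 x) :
    ∃ T : ℝ → ℝ, T a = a ∧ T b = b ∧ ∀ x, HasDerivAt T (g1 x / g2 (T x)) x := by
  set H : ℝ → ℝ := fun x => ∫ t in a..x, g2 t with hH
  set F : ℝ → ℝ := fun x => ∫ t in a..x, g1 t with hF
  have dH : ∀ x, HasDerivAt H (g2 x) x := fun x => c2.integral_hasStrictDerivAt a x |>.hasDerivAt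
  have dF : ∀ x, HasDerivAt F (g1 x) x := fun x => c1.integral_hasStrictDerivAt a x |>.hasDerivAt
  have pos : ∀ x, 0 < g2 x := fun x => hδ.trans_le (p2 x)
  have mono : StrictMono H := strictMono_of_deriv_pos (fun x => by rw [(dH x).deriv]; exact pos x)
  have mono2 : Monotone (fun x => H x - δ * x) := by
    have d : ∀ x, HasDerivAt (fun x => H x - δ * x) (g2 x - δ * 1) x :=
      fun x => (dH x).sub ((hasDerivAt_id x).const_mul δ)
    refine monotone_of_deriv_nonneg (fun x => (d x).differentiableAt) (fun x => ?_)
    rw [(d x).deriv]; linarith [p2 x]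
  have cH : Continuous H := continuous_iff_continuousAt.2 (fun x => (dH x).continuousAt)
  have Ha : H a = 0 := by simp [hH]
  have surj : Function.Surjective H := by
    intro y
    rcases le_total 0 y with hy | hy
    · have h1 : H a - δ * a ≤ H (a + y / δ) - δ * (a + y / δ) :=
        mono2 (by have : 0 ≤ y / δ := by positivity
                  linarith)
      have h2 : δ * (a + y / δ) = δ * a + y := by field_simp
      have h3 : y ∈ Icc (H a) (H (a + y / δ)) := ⟨by rw [Ha]; exact hy, by rw [h2] at h1; linarith⟩
      obtain ⟨z, _, hz⟩ := intermediate_value_Icc (by have : 0 ≤ y / δ := by positivity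
                                                      linarith) cH.continuousOn h3
      exact ⟨z, hz⟩
    · have hyd : y / δ ≤ 0 := div_nonpos_of_nonpos_of_nonneg hy hδ.le
      have h1 : H (a + y / δ) - δ * (a + y / δ) ≤ H a - δ * a :=
        mono2 (by linarith)
      have h2 : δ * (a + y / δ) = δ * a + y := by field_simp
      have h3 : y ∈ Icc (H (a + y / δ)) (H a) := ⟨by rw [h2] at h1; linarith, by rw [Ha]; exact hy⟩
      obtain ⟨z, _, hz⟩ := intermediate_value_Icc (by linarith) cH.continuousOn h3
      exact ⟨z, hz⟩
  let e := mono.orderIsoOfSurjective H surj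
  have he : ∀ x, e x = H x := fun x => rfl
  have hse : ∀ y, H (e.symm y) = y := fun y => by rw [← he]; exact e.apply_symm_apply y
  have hes : ∀ y, e.symm (H y) = y := fun y => by rw [← he]; exact e.symm_apply_apply y
  have dinv : ∀ y, HasDerivAt e.symm (g2 (e.symm y))⁻¹ y := fun y =>
    HasDerivAt.of_local_left_inverse e.symm.continuous.continuousAt (dH _) (pos _).ne'
      (Filter.Eventually.of_forall hse)
  refine ⟨fun x => e.symm (F x), ?_, ?_, fun x => ?_⟩
  · have : F a = H a := by simp [hF, hH]
    simp only [this, hes]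
  · have : F b = H b := h
    simp only [this, hes]
  · have := (dinv (F x)).comp x (dF x)
    simp only [div_eq_inv_mul]
    exact this

lemma lsi_normalized (a b ρ : ℝ) (hab : a < b) (hρ : 0 < ρ) (h w Y U f f' : ℝ → ℝ)
    (ph : ∀ x ∈ Icc a b, 0 < h x) (pw : ∀ x ∈ Icc a b, 0 < w x) (pf : ∀ x ∈ Icc a b, 0 < f x)
    (dY : ∀ x ∈ Icc a b, HasDerivAt Y (1 / w x) x)
    (dwh : ∀ x ∈ Icc a b, HasDerivAt (fun x => w x * h x) (-(U x * h x)) x)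
    (df : ∀ x ∈ Icc a b, HasDerivAt f (f' x) x)
    (ch : ContinuousOn h (Icc a b)) (cw : ContinuousOn w (Icc a b))
    (cf' : ContinuousOn f' (Icc a b))
    (conv : ∀ x ∈ Icc a b, ∀ t ∈ Icc a b, Real.log (w t * h t) - Real.log (w x * h x) ≤
      - U x * (Y t - Y x) - ρ / 2 * (Y t - Y x) ^ 2)
    (norm : ∫ x in a..b, f x * h x = ∫ x in a..b, h x) :
    ∫ x in a..b, f x * Real.log (f x) * h x ≤
      ∫ x in a..b, 1 / (2 * ρ) * (w x ^ 2 * f' x ^ 2 / f x * h x) := by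
  have cf : ContinuousOn f (Icc a b) := fun x hx => (df x hx).continuousAt.continuousWithinAt
  set g1 : ℝ → ℝ := IccExtend hab.le ((Icc a b).domRestrict (fun x => f x * h x)) with hg1
  set g2 : ℝ → ℝ := IccExtend hab.le ((Icc a b).domRestrict h) with hg2
  have e1 : ∀ x ∈ Icc a b, g1 x = f x * h x := fun x hx => by
    rw [hg1, IccExtend_of_mem _ _ hx]; rfl
  have e2 : ∀ x ∈ Icc a b, g2 x = h x := fun x hx => by
    rw [hg2, IccExtend_of_mem _ _ hx]; rfl
  have c1 : Continuous g1 := (continuousOn_iff_continuous_domRestrict.1 (cf.mul ch)).Icc_extend'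
  have c2 : Continuous g2 := (continuousOn_iff_continuous_domRestrict.1 ch).Icc_extend'
  obtain ⟨z, hz, hzmin⟩ := isCompact_Icc.exists_isMinOn (nonempty_Icc.2 hab.le) ch
  have p2 : ∀ x, h z ≤ g2 x := fun x => hzmin (projIcc a b hab.le x).2
  have p1 : ∀ x, 0 < g1 x := fun x =>
    mul_pos (pf _ (projIcc a b hab.le x).2) (ph _ (projIcc a b hab.le x).2)
  have i1 : ∫ x in a..b, g1 x = ∫ x in a..b, f x * h x :=
    intervalIntegral.integral_congr (fun x hx => e1 x (by rwa [uIcc_of_le hab.le] at hx))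
  have i2 : ∫ x in a..b, g2 x = ∫ x in a..b, h x :=
    intervalIntegral.integral_congr (fun x hx => e2 x (by rwa [uIcc_of_le hab.le] at hx))
  obtain ⟨T, Ta, Tb, dT⟩ := exists_transport a b g1 g2 c1 c2 (h z) (ph z hz) p2
    (by rw [i1, i2, norm])
  have Tmono : Monotone T := monotone_of_deriv_nonneg (fun x => (dT x).differentiableAt)
    (fun x => by rw [(dT x).deriv]; exact (div_pos (p1 x) ((ph z hz).trans_le (p2 _))).le)
  have Tmem : ∀ x ∈ Icc a b, T x ∈ Icc a b := fun x hx =>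
    ⟨by have := Tmono hx.1; rwa [Ta] at this, by have := Tmono hx.2; rwa [Tb] at this⟩
  set G : ℝ → ℝ := fun x => (Y (T x) - Y x) * f x * (w x * h x) with hG
  set G' : ℝ → ℝ := fun x => ((1 / w (T x) * (f x * h x / h (T x)) - 1 / w x) * f x +
     (Y (T x) - Y x) * f' x) * (w x * h x) + (Y (T x) - Y x) * f x * (-(U x * h x)) with hG'
  have dG : ∀ x ∈ Icc a b, HasDerivAt G (G' x) x := by
    intro x hx
    have h1 := (dY _ (Tmem x hx)).comp x (dT x)
    rw [e1 x hx, e2 _ (Tmem x hx)] at h1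
    exact ((h1.sub (dY x hx)).mul (df x hx)).mul (dwh x hx)
  have Ga : G a = 0 := by simp [hG, Ta]
  have Gb : G b = 0 := by simp [hG, Tb]
  have cL : ContinuousOn (fun x => f x * Real.log (f x) * h x) (Icc a b) :=
    (cf.mul (cf.log (fun x hx => (pf x hx).ne'))).mul ch
  have cR : ContinuousOn (fun x => 1 / (2 * ρ) * (w x ^ 2 * f' x ^ 2 / f x * h x)) (Icc a b) :=
    continuousOn_const.mul ((((cw.pow 2).mul (cf'.pow 2)).div cf (fun x hx => (pf x hx).ne')).mul ch)
  have iL := cL.intervalIntegrable_of_Icc (μ := volume) hab.le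
  have iR := cR.intervalIntegrable_of_Icc (μ := volume) hab.le
  have key := intervalIntegral.integral_le_sub_of_hasDeriv_right_of_le (g := G) (g' := G')
    (φ := fun x => f x * Real.log (f x) * h x - 1 / (2 * ρ) * (w x ^ 2 * f' x ^ 2 / f x * h x))
    hab.le (fun x hx => (dG x hx).continuousAt.continuousWithinAt)
    (fun x hx => (dG x (Ioo_subset_Icc_self hx)).hasDerivWithinAt)
    ((cL.sub cR).integrableOn_Icc) ?_
  · rw [intervalIntegral.integral_sub iL iR, Ga, Gb] at key
    linarith
  · intro x hx'
    have hx := Ioo_subset_Icc_self hx'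
    have hT := Tmem x hx
    have qh := ph x hx
    have qw := pw x hx
    have qf := pf x hx
    have qhT := ph _ hT
    have qwT := pw _ hT
    set θ := Y (T x) - Y x with hθ
    set s := f x * (w x * h x) / (w (T x) * h (T x)) with hs
    have spos : 0 < s := by positivity
    have hlog : Real.log (f x) = Real.log s + (Real.log (w (T x) * h (T x)) - Real.log (w x * h x)) := by
      rw [hs, Real.log_div (by positivity) (by positivity),
        Real.log_mul qf.ne' (by positivity)]; ring
    have hls := Real.log_le_sub_one_of_pos spos
    have hc := conv x hx _ hT
    have hlf : Real.log (f x) ≤ s - 1 - U x * θ - ρ / 2 * θ ^ 2 := by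
      rw [hlog]; simp only [← hθ] at hc; linarith
    have hG'x : G' x = f x * h x * (s - 1 - U x * θ) + θ * f' x * (w x * h x) := by
      simp only [hG', ← hθ, hs]; field_simp; ring
    have h1 : f x * Real.log (f x) * h x ≤ f x * h x * (s - 1 - U x * θ - ρ / 2 * θ ^ 2) := by
      have := mul_le_mul_of_nonneg_left hlf (mul_pos qf qh).le
      linarith
    have h2 : 0 ≤ θ * f' x * (w x * h x) + f x * h x * (ρ / 2 * θ ^ 2)
        + 1 / (2 * ρ) * (w x ^ 2 * f' x ^ 2 / f x * h x) := by
      have : θ * f' x * (w x * h x) + f x * h x * (ρ / 2 * θ ^ 2)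
        + 1 / (2 * ρ) * (w x ^ 2 * f' x ^ 2 / f x * h x)
        = h x / (2 * ρ * f x) * (ρ * f x * θ + w x * f' x) ^ 2 := by field_simp; ring
      rw [this]; positivity
    show f x * Real.log (f x) * h x - 1 / (2 * ρ) * (w x ^ 2 * f' x ^ 2 / f x * h x) ≤ G' x
    rw [hG'x]; nlinarith

lemma conv_aux (ρ : ℝ) (w Y U V : ℝ → ℝ) (pw : ∀ x > 0, 0 < w x)
    (dY : ∀ x > 0, HasDerivAt Y (1 / w x) x)
    (dV : ∀ x > 0, HasDerivAt V (U x / w x) x)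
    (mono : MonotoneOn (fun x => U x - ρ * Y x) (Ioi 0)) (x t : ℝ) (hx : 0 < x) (ht : 0 < t) :
    U x * (Y t - Y x) + ρ / 2 * (Y t - Y x) ^ 2 ≤ V t - V x := by
  set K : ℝ → ℝ := fun t => V t - U x * (Y t - Y x) - ρ / 2 * (Y t - Y x) ^ 2 with hK
  have dK : ∀ t > 0, HasDerivAt K (1 / w t * ((U t - ρ * Y t) - (U x - ρ * Y x))) t := by
    intro t ht
    have h1 := (dY t ht).sub_const (Y x)
    have := ((dV t ht).sub (h1.const_mul (U x))).sub ((h1.pow 2).const_mul (ρ / 2))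
    refine HasDerivAt.congr_deriv this ?_
    have := pw t ht
    norm_num; field_simp; ring
  have hKx : K x = V x := by simp [hK]
  suffices K x ≤ K t by simp only [hKx] at this; simp only [hK] at this; linarith
  rcases le_total x t with hxt | hxt
  · refine monotoneOn_of_deriv_nonneg (convex_Icc x t)
      (fun y hy => (dK y (hx.trans_le hy.1)).continuousAt.continuousWithinAt)
      (fun y hy => (dK y (hx.trans_le (interior_subset hy).1)).differentiableAt.differentiableWithinAt)
      (fun y hy => ?_) (left_mem_Icc.2 hxt) (right_mem_Icc.2 hxt) hxt
    have hy' := interior_subset hy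
    have hy0 := hx.trans_le hy'.1
    rw [(dK y hy0).deriv]
    exact mul_nonneg (by have := pw y hy0; positivity) (sub_nonneg.2 (mono hx hy0 hy'.1))
  · refine antitoneOn_of_deriv_nonpos (convex_Icc t x)
      (fun y hy => (dK y (ht.trans_le hy.1)).continuousAt.continuousWithinAt)
      (fun y hy => (dK y (ht.trans_le (interior_subset hy).1)).differentiableAt.differentiableWithinAt)
      (fun y hy => ?_) (left_mem_Icc.2 hxt) (right_mem_Icc.2 hxt) hxt
    have hy' := interior_subset hy
    have hy0 := ht.trans_le hy'.1
    rw [(dK y hy0).deriv]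
    exact mul_nonpos_of_nonneg_of_nonpos (by have := pw y hy0; positivity)
      (sub_nonpos.2 (mono hy0 hx hy'.2))

lemma rho_le (β α m : ℝ) (hm : 0 < m) (hα : 1 < α) (hα32 : α ≤ 3 / 2) (hαβ : α < β)
    (x : ℝ) (hx : 0 < x) :
    (if α < 3 / 2 then
              (1 / 2) * ((2 * β - α) / (3 / 2 - α)) ^ (3 - 2 * α) *
                (m * (2 - α)) ^ (2 * α - 2) * (α - 1) ^ (5 - 4 * α)
            else m / 2) ≤ (2 * β - α) * (α - 1) * x ^ (2 * α - 2) + m * (2 - α) * x ^ (2 * α - 3) := by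
  split_ifs with h
  · have hq : 0 < 3 / 2 - α := by linarith
    have hp : 0 < α - 1 := by linarith
    have hb : 0 < 2 * β - α := by linarith
    have hB : 0 < m * (2 - α) := mul_pos hm (by linarith)
    have amgm := Real.geom_mean_le_arith_mean2_weighted (w₁ := 3 - 2 * α) (w₂ := 2 * α - 2)
      (p₁ := (2 * β - α) * (α - 1) * x ^ (2 * α - 2) / (3 - 2 * α))
      (p₂ := m * (2 - α) * x ^ (2 * α - 3) / (2 * α - 2)) (by linarith) (by linarith)
      (by have : 0 < 3 - 2 * α := by linarith
          positivity)
      (by have : 0 < 2 * α - 2 := by linarith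
          positivity) (by ring)
    have e1 : (3 - 2 * α) * ((2 * β - α) * (α - 1) * x ^ (2 * α - 2) / (3 - 2 * α)) =
      (2 * β - α) * (α - 1) * x ^ (2 * α - 2) := mul_div_cancel₀ _ (by linarith)
    have e2 : (2 * α - 2) * (m * (2 - α) * x ^ (2 * α - 3) / (2 * α - 2)) =
      m * (2 - α) * x ^ (2 * α - 3) := mul_div_cancel₀ _ (by linarith)
    rw [e1, e2] at amgm
    refine le_of_eq_of_le ?_ amgm
    have s1 : (2 * β - α) * (α - 1) * x ^ (2 * α - 2) / (3 - 2 * α) =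
      (1 / 2) * ((2 * β - α) / (3 / 2 - α)) * (α - 1) * x ^ (2 * α - 2) := by
      have : 3 - 2 * α = 2 * (3 / 2 - α) := by ring
      rw [this]; field_simp
    have s2 : m * (2 - α) * x ^ (2 * α - 3) / (2 * α - 2) =
      (1 / 2) * (m * (2 - α)) * (α - 1)⁻¹ * x ^ (2 * α - 3) := by
      have : 2 * α - 2 = 2 * (α - 1) := by ring
      have h2 : x ^ (2 * α - 3) / (2 * α - 2) = x ^ (2 * α - 3) / (2 * (α - 1)) := by rw [← this]
      rw [mul_div_assoc, h2]; field_simp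
    rw [s1, s2]
    generalize hD : (2 * β - α) / (3 / 2 - α) = D
    have hDp : 0 < D := by rw [← hD]; positivity
    generalize m * (2 - α) = B at hB
    have x1 := Real.rpow_pos_of_pos hx (2 * α - 2)
    have x2 := Real.rpow_pos_of_pos hx (2 * α - 3)
    rw [Real.mul_rpow (by positivity) x1.le, Real.mul_rpow (by positivity) hp.le,
      Real.mul_rpow (by positivity) hDp.le, Real.mul_rpow (by positivity) x2.le,
      Real.mul_rpow (by positivity) (by positivity), Real.mul_rpow (by positivity) hB.le,
      ← Real.rpow_mul hx.le, ← Real.rpow_mul hx.le, ← Real.rpow_neg_one (α - 1),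
      ← Real.rpow_mul hp.le]
    have f1 : (1 / 2 : ℝ) ^ (3 - 2 * α) * (1 / 2 : ℝ) ^ (2 * α - 2) = 1 / 2 := by
      rw [← Real.rpow_add (by norm_num)]; ring_nf; simp
    have f2 : x ^ ((2 * α - 2) * (3 - 2 * α)) * x ^ ((2 * α - 3) * (2 * α - 2)) = 1 := by
      rw [← Real.rpow_add hx]; ring_nf; simp
    have f3 : (α - 1) ^ (5 - 4 * α) = (α - 1) ^ (3 - 2 * α) * (α - 1) ^ (-1 * (2 * α - 2)) := by
      rw [← Real.rpow_add hp]; ring_nf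
    calc _ = (1 / 2) * D ^ (3 - 2 * α) * B ^ (2 * α - 2) * (α - 1) ^ (5 - 4 * α) * 1 := by ring
      _ = ((1 / 2 : ℝ) ^ (3 - 2 * α) * (1 / 2 : ℝ) ^ (2 * α - 2)) * D ^ (3 - 2 * α) * B ^ (2 * α - 2) * ((α - 1) ^ (3 - 2 * α) * (α - 1) ^ (-1 * (2 * α - 2))) * (x ^ ((2 * α - 2) * (3 - 2 * α)) * x ^ ((2 * α - 3) * (2 * α - 2))) := by rw [f1, f2, f3]
      _ = _ := by ring
  · have : α = 3 / 2 := by linarith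
    subst this
    norm_num
    have : 0 < (2 * β - 3 / 2) := by linarith
    have : 0 ≤ (2 * β - 3 / 2) * (1 / 2) * x := by positivity
    linarith

lemma rho_pos (β α m : ℝ) (hm : 0 < m) (hα : 1 < α) (hα32 : α ≤ 3 / 2) (hαβ : α < β) :
    0 < (if α < 3 / 2 then
              (1 / 2) * ((2 * β - α) / (3 / 2 - α)) ^ (3 - 2 * α) *
                (m * (2 - α)) ^ (2 * α - 2) * (α - 1) ^ (5 - 4 * α)
            else m / 2) := by
  split_ifs with h
  · have hq : 0 < 3 / 2 - α := by linarith
    have hp : 0 < α - 1 := by linarith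
    have hb : 0 < 2 * β - α := by linarith
    have hB : 0 < m * (2 - α) := mul_pos hm (by linarith)
    positivity
  · positivity

/-- compact version for positive f -/
lemma lsi_compact (β α m ρ C a b : ℝ) (hα : 1 < α) (hC : 0 < C) (hρ : 0 < ρ) (ha : 0 < a) (hab : a < b)
    (hle : ∀ x > 0, ρ ≤ (2 * β - α) * (α - 1) * x ^ (2 * α - 2) + m * (2 - α) * x ^ (2 * α - 3))
    (h : ℝ → ℝ) (hh : h = fun x => C * x ^ (-(2 * β)) * Real.exp (-m / x))
    (f f' : ℝ → ℝ) (pf : ∀ x ∈ Icc a b, 0 < f x) (df : ∀ x ∈ Icc a b, HasDerivAt f (f' x) x)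
    (cf' : ContinuousOn f' (Icc a b)) :
    (∫ x in a..b, f x * Real.log (f x) * h x)
      - (∫ x in a..b, f x * h x) * Real.log (∫ x in a..b, f x * h x)
      + (∫ x in a..b, f x * h x) * Real.log (∫ x in a..b, h x)
      ≤ ∫ x in a..b, 1 / (2 * ρ) * (x ^ (2 * α) * f' x ^ 2 / f x * h x) := by
  have hpos : ∀ x > 0, 0 < h x := fun x hx => by rw [hh]; positivity
  have I0 : ∀ x ∈ Icc a b, 0 < x := fun x hx => ha.trans_le hx.1
  set Y : ℝ → ℝ := fun x => x ^ (1 - α) / (1 - α) with hY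
  set U : ℝ → ℝ := fun x => (2 * β - α) * x ^ (α - 1) - m * x ^ (α - 2) with hU
  set w : ℝ → ℝ := fun x => x ^ α with hw
  set V : ℝ → ℝ := fun x => (2 * β - α) * Real.log x + m * x⁻¹ with hV
  have wpos : ∀ x > 0, 0 < w x := fun x hx => Real.rpow_pos_of_pos hx _
  have dY : ∀ x > 0, HasDerivAt Y (1 / w x) x := by
    intro x hx
    have := (Real.hasDerivAt_rpow_const (x := x) (p := 1 - α) (Or.inl hx.ne')).div_const (1 - α)
    refine HasDerivAt.congr_deriv this ?_
    have h1 : (1 - α) ≠ 0 := by linarith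
    rw [mul_div_assoc, ← mul_div_assoc, mul_div_cancel_left₀ _ h1, show 1 - α - 1 = -α by ring, Real.rpow_neg hx.le, one_div]
  have dh : ∀ x > 0, HasDerivAt (fun x => Real.log (w x * h x)) (-(U x / w x)) x ∧
      HasDerivAt V (U x / w x) x ∧ Real.log (w x * h x) = Real.log C - V x := by
    have lv : ∀ x > 0, Real.log (w x * h x) = Real.log C - V x := by
      intro x hx
      rw [Real.log_mul (wpos x hx).ne' (hpos x hx).ne', hh, hw]
      beta_reduce
      rw [Real.log_mul (by positivity) (by positivity), Real.log_mul (by positivity) (by positivity),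
        Real.log_rpow hx, Real.log_rpow hx, Real.log_exp, hV]
      beta_reduce
      ring
    intro x hx
    have d2 : HasDerivAt V (U x / w x) x := by
      have := ((Real.hasDerivAt_log hx.ne').const_mul (2 * β - α)).add
        ((hasDerivAt_inv hx.ne').const_mul m)
      refine HasDerivAt.congr_deriv this ?_
      have e1 : x ^ (α - 1) = x ^ α * x⁻¹ := by rw [Real.rpow_sub hx, Real.rpow_one]; rfl
      have e2 : x ^ (α - 2) = x ^ α * (x ^ 2)⁻¹ := by
        rw [Real.rpow_sub hx, Real.rpow_two]; rfl
      have := wpos x hx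
      simp only [hw] at this
      simp only [hU, hw, e1, e2]
      field_simp
      try ring
    refine ⟨?_, d2, lv x hx⟩
    have := d2.const_sub (Real.log C)
    refine this.congr_of_eventuallyEq ?_
    filter_upwards [lt_mem_nhds hx] with y hy using lv y hy
  have dwh : ∀ x > 0, HasDerivAt (fun x => w x * h x) (-(U x * h x)) x := by
    intro x hx
    have := (dh x hx).1.exp
    rw [Real.exp_log (mul_pos (wpos x hx) (hpos x hx))] at this
    have h2 : w x * h x * -(U x / w x) = -(U x * h x) := by
      have := (wpos x hx).ne'
      field_simp
    rw [h2] at this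
    refine this.congr_of_eventuallyEq ?_
    filter_upwards [lt_mem_nhds hx] with y hy
    rw [Real.exp_log (mul_pos (wpos y hy) (hpos y hy))]
  have dU : ∀ x > 0, HasDerivAt U ((2 * β - α) * ((α - 1) * x ^ (α - 1 - 1)) - m * ((α - 2) * x ^ (α - 2 - 1))) x := by
    intro x hx
    exact ((Real.hasDerivAt_rpow_const (Or.inl hx.ne')).const_mul _).sub
      ((Real.hasDerivAt_rpow_const (Or.inl hx.ne')).const_mul _)
  have mono : MonotoneOn (fun x => U x - ρ * Y x) (Ioi 0) := by
    have d : ∀ x > 0, HasDerivAt (fun x => U x - ρ * Y x) _ x :=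
      fun x hx => (dU x hx).sub ((dY x hx).const_mul ρ)
    refine monotoneOn_of_deriv_nonneg (convex_Ioi 0)
      (fun y hy => (d y hy).continuousAt.continuousWithinAt)
      (fun y hy => (d y (interior_subset hy)).differentiableAt.differentiableWithinAt)
      (fun y hy => ?_)
    have hy0 : 0 < y := interior_subset hy
    rw [(d y hy0).deriv]
    have e1 : y ^ (2 * α - 2) = y ^ α * y ^ (α - 1 - 1) := by rw [← Real.rpow_add hy0]; ring_nf
    have e2 : y ^ (2 * α - 3) = y ^ α * y ^ (α - 2 - 1) := by rw [← Real.rpow_add hy0]; ring_nf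
    have := hle y hy0
    have hwy := wpos y hy0
    rw [e1, e2] at this
    have h3 : ρ * (1 / w y) ≤ (2 * β - α) * ((α - 1) * y ^ (α - 1 - 1)) - m * ((α - 2) * y ^ (α - 2 - 1)) := by
      rw [mul_one_div, div_le_iff₀ hwy]
      simp only [hw]
      linarith
    linarith
  have ch : ContinuousOn h (Icc a b) := by
    intro x hx
    have hx0 := (I0 x hx).ne'
    rw [hh]
    refine ContinuousAt.continuousWithinAt ?_
    exact (continuousAt_const.mul (Real.continuousAt_rpow_const _ _ (Or.inl hx0))).mul
      (Real.continuous_exp.continuousAt.comp (continuousAt_const.div continuousAt_id hx0))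
  have cw : ContinuousOn w (Icc a b) := fun x hx =>
    (Real.continuousAt_rpow_const _ _ (Or.inl (I0 x hx).ne')).continuousWithinAt
  have cf : ContinuousOn f (Icc a b) := fun x hx => (df x hx).continuousAt.continuousWithinAt
  have Zpos : 0 < ∫ x in a..b, h x :=
    intervalIntegral.intervalIntegral_pos_of_pos_on (ch.intervalIntegrable_of_Icc hab.le)
      (fun x hx => hpos x (I0 x (Ioo_subset_Icc_self hx))) hab
  have cpos : 0 < ∫ x in a..b, f x * h x :=
    intervalIntegral.intervalIntegral_pos_of_pos_on ((cf.mul ch).intervalIntegrable_of_Icc hab.le)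
      (fun x hx => mul_pos (pf x (Ioo_subset_Icc_self hx)) (hpos x (I0 x (Ioo_subset_Icc_self hx)))) hab
  set Z := ∫ x in a..b, h x with hZ
  set c := ∫ x in a..b, f x * h x with hc
  have lpos : 0 < Z / c := div_pos Zpos cpos
  have main := lsi_normalized a b ρ hab hρ h w Y U (fun x => Z / c * f x) (fun x => Z / c * f' x)
    (fun x hx => hpos x (I0 x hx)) (fun x hx => wpos x (I0 x hx))
    (fun x hx => mul_pos lpos (pf x hx)) (fun x hx => dY x (I0 x hx))
    (fun x hx => dwh x (I0 x hx)) (fun x hx => (df x hx).const_mul _) ch cw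
    (continuousOn_const.mul cf')
    (fun x hx t ht => by
      have := conv_aux ρ w Y U V wpos dY (fun x hx => (dh x hx).2.1) mono x t (I0 x hx) (I0 t ht)
      rw [(dh x (I0 x hx)).2.2, (dh t (I0 t ht)).2.2]
      linarith)
    (by simp only [mul_assoc]
        rw [intervalIntegral.integral_const_mul, ← hc, ← hZ]
        field_simp)
  have eL : ∫ x in a..b, Z / c * f x * Real.log (Z / c * f x) * h x =
      Z / c * ((∫ x in a..b, f x * Real.log (f x) * h x) + Real.log (Z / c) * c) := by
    rw [hc, ← hc, ← intervalIntegral.integral_const_mul, ← intervalIntegral.integral_add,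
      ← intervalIntegral.integral_const_mul]
    · refine intervalIntegral.integral_congr (fun x hx => ?_)
      rw [uIcc_of_le hab.le] at hx
      beta_reduce
      rw [Real.log_mul lpos.ne' (pf x hx).ne']; ring
    · exact ((cf.mul (cf.log (fun x hx => (pf x hx).ne'))).mul ch).intervalIntegrable_of_Icc hab.le
    · exact (continuousOn_const.mul (cf.mul ch)).intervalIntegrable_of_Icc hab.le
  have eR : ∫ x in a..b, 1 / (2 * ρ) * (w x ^ 2 * (Z / c * f' x) ^ 2 / (Z / c * f x) * h x) =
      Z / c * ∫ x in a..b, 1 / (2 * ρ) * (x ^ (2 * α) * f' x ^ 2 / f x * h x) := by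
    rw [← intervalIntegral.integral_const_mul]
    refine intervalIntegral.integral_congr (fun x hx => ?_)
    rw [uIcc_of_le hab.le] at hx
    have e : x ^ (2 * α) = w x ^ 2 := by
      simp only [hw]; rw [mul_comm, Real.rpow_mul (I0 x hx).le, Real.rpow_two]
    have := pf x hx
    simp only [e]
    generalize Z / c = l at lpos
    field_simp
  rw [eL, eR] at main
  have main2 := le_of_mul_le_mul_left main lpos
  rw [Real.log_div Zpos.ne' cpos.ne'] at main2
  linarith

lemma lsi_compact_sq (β α m ρ C a b : ℝ) (hα : 1 < α) (hC : 0 < C) (hρ : 0 < ρ) (ha : 0 < a) (hab : a < b)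
    (hle : ∀ x > 0, ρ ≤ (2 * β - α) * (α - 1) * x ^ (2 * α - 2) + m * (2 - α) * x ^ (2 * α - 3))
    (h : ℝ → ℝ) (hh : h = fun x => C * x ^ (-(2 * β)) * Real.exp (-m / x))
    (φ : ℝ → ℝ) (hφ : ContDiffOn ℝ (⊤ : ℕ∞) φ (Ioi 0)) :
    (∫ x in a..b, φ x ^ 2 * Real.log (φ x ^ 2) * h x)
      - (∫ x in a..b, φ x ^ 2 * h x) * Real.log (∫ x in a..b, φ x ^ 2 * h x)
      + (∫ x in a..b, φ x ^ 2 * h x) * Real.log (∫ x in a..b, h x)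
      ≤ 2 / ρ * ∫ x in a..b, x ^ (2 * α) * (deriv φ x) ^ 2 * h x := by
  have hpos : ∀ x > 0, 0 < h x := fun x hx => by rw [hh]; positivity
  have I0 : ∀ x ∈ Icc a b, 0 < x := fun x hx => ha.trans_le hx.1
  have ch : ContinuousOn h (Icc a b) := by
    intro x hx
    have hx0 := (I0 x hx).ne'
    rw [hh]
    refine ContinuousAt.continuousWithinAt ?_
    exact (continuousAt_const.mul (Real.continuousAt_rpow_const _ _ (Or.inl hx0))).mul
      (Real.continuous_exp.continuousAt.comp (continuousAt_const.div continuousAt_id hx0))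
  have dφ : ∀ x ∈ Icc a b, HasDerivAt φ (deriv φ x) x := fun x hx =>
    ((hφ.differentiableOn (by simp)).differentiableAt (Ioi_mem_nhds (I0 x hx))).hasDerivAt
  have cφ : ContinuousOn φ (Icc a b) := fun x hx => (dφ x hx).continuousAt.continuousWithinAt
  have cφ' : ContinuousOn (deriv φ) (Icc a b) :=
    (hφ.continuousOn_deriv_of_isOpen isOpen_Ioi (by simp)).mono I0
  have cw : ContinuousOn (fun x : ℝ => x ^ (2 * α)) (Icc a b) := fun x hx =>
    (Real.continuousAt_rpow_const _ _ (Or.inl (I0 x hx).ne')).continuousWithinAt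
  set ψ : ℝ → ℝ := IccExtend hab.le ((Icc a b).domRestrict φ) with hψ
  set k : ℝ → ℝ := IccExtend hab.le ((Icc a b).domRestrict h) with hk
  have e1 : ∀ x ∈ Icc a b, ψ x = φ x := fun x hx => by
    rw [hψ, IccExtend_of_mem _ _ hx]; rfl
  have e2 : ∀ x ∈ Icc a b, k x = h x := fun x hx => by
    rw [hk, IccExtend_of_mem _ _ hx]; rfl
  have c1 : Continuous ψ := (continuousOn_iff_continuous_domRestrict.1 cφ).Icc_extend'
  have c2 : Continuous k := (continuousOn_iff_continuous_domRestrict.1 ch).Icc_extend'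
  have cml := Real.continuous_mul_log
  have cA : Continuous (fun ε : ℝ => ∫ x in a..b, (ψ x ^ 2 + ε) * Real.log (ψ x ^ 2 + ε) * k x) := by
    refine intervalIntegral.continuous_parametric_intervalIntegral_of_continuous' ?_ a b
    have : Continuous (fun p : ℝ × ℝ => ψ p.2 ^ 2 + p.1) := by fun_prop
    exact (cml.comp this).mul (c2.comp continuous_snd)
  have cc : Continuous (fun ε : ℝ => ∫ x in a..b, (ψ x ^ 2 + ε) * k x) := by
    refine intervalIntegral.continuous_parametric_intervalIntegral_of_continuous' ?_ a b
    have : Continuous (fun p : ℝ × ℝ => ψ p.2 ^ 2 + p.1) := by fun_prop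
    exact this.mul (c2.comp continuous_snd)
  have rA : ∀ ε, ∫ x in a..b, (ψ x ^ 2 + ε) * Real.log (ψ x ^ 2 + ε) * k x =
      ∫ x in a..b, (φ x ^ 2 + ε) * Real.log (φ x ^ 2 + ε) * h x := fun ε =>
    intervalIntegral.integral_congr (fun x hx => by
      rw [uIcc_of_le hab.le] at hx; beta_reduce; rw [e1 x hx, e2 x hx])
  have rc : ∀ ε, ∫ x in a..b, (ψ x ^ 2 + ε) * k x =
      ∫ x in a..b, (φ x ^ 2 + ε) * h x := fun ε =>
    intervalIntegral.integral_congr (fun x hx => by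
      rw [uIcc_of_le hab.le] at hx; beta_reduce; rw [e1 x hx, e2 x hx])
  simp only [rA] at cA
  simp only [rc] at cc
  have cont := (cA.sub (cml.comp cc)).add (cc.mul (continuous_const (y := Real.log (∫ x in a..b, h x))))
  have tend := (cont.tendsto 0).mono_left (nhdsWithin_le_nhds (s := Ioi 0))
  have fin : ∀ ε > 0, (∫ x in a..b, (φ x ^ 2 + ε) * Real.log (φ x ^ 2 + ε) * h x)
      - (∫ x in a..b, (φ x ^ 2 + ε) * h x) * Real.log (∫ x in a..b, (φ x ^ 2 + ε) * h x)
      + (∫ x in a..b, (φ x ^ 2 + ε) * h x) * Real.log (∫ x in a..b, h x)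
      ≤ 2 / ρ * ∫ x in a..b, x ^ (2 * α) * (deriv φ x) ^ 2 * h x := by
    intro ε hε
    have pf : ∀ x, 0 < φ x ^ 2 + ε := fun x => by positivity
    have cf' : ContinuousOn (fun x => 2 * φ x * deriv φ x) (Icc a b) :=
      (continuousOn_const.mul cφ).mul cφ'
    refine (lsi_compact β α m ρ C a b hα hC hρ ha hab hle h hh (fun x => φ x ^ 2 + ε)
      (fun x => 2 * φ x * deriv φ x) (fun x _ => pf x)
      (fun x hx => by simpa using ((dφ x hx).pow 2).add_const ε) cf').trans ?_
    rw [← intervalIntegral.integral_const_mul]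
    refine intervalIntegral.integral_mono_on hab.le ?_ ?_ ?_
    · exact (continuousOn_const.mul (((cw.mul (cf'.pow 2)).div ((cφ.pow 2).add continuousOn_const)
        (fun x hx => (pf x).ne')).mul ch)).intervalIntegrable_of_Icc hab.le
    · exact (continuousOn_const.mul ((cw.mul (cφ'.pow 2)).mul ch)).intervalIntegrable_of_Icc hab.le
    · intro x hx
      have hx0 := I0 x hx
      have := hpos x hx0
      have := pf x
      have hw := Real.rpow_pos_of_pos hx0 (2 * α)
      have e : 2 / ρ * (x ^ (2 * α) * deriv φ x ^ 2 * h x)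
        - 1 / (2 * ρ) * (x ^ (2 * α) * (2 * φ x * deriv φ x) ^ 2 / (φ x ^ 2 + ε) * h x)
        = 2 / ρ * x ^ (2 * α) * deriv φ x ^ 2 * h x * ε / (φ x ^ 2 + ε) := by
        field_simp; ring
      have : 0 ≤ 2 / ρ * x ^ (2 * α) * deriv φ x ^ 2 * h x * ε / (φ x ^ 2 + ε) := by positivity
      linarith
  have := le_of_tendsto tend (b := 2 / ρ * ∫ x in a..b, x ^ (2 * α) * (deriv φ x) ^ 2 * h x)
    (by filter_upwards [self_mem_nhdsWithin] with ε hε using fin ε hε)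
  simpa using this

lemma tendsto_Ioi (g : ℝ → ℝ) (hg : IntegrableOn g (Ioi 0)) :
    Filter.Tendsto (fun n : ℕ => ∫ x in (1 / ((n : ℝ) + 2))..((n : ℝ) + 2), g x) Filter.atTop
      (nhds (∫ x in Ioi (0 : ℝ), g x)) := by
  have hlt : ∀ n : ℕ, 1 / ((n : ℝ) + 2) ≤ (n : ℝ) + 2 := fun n => by
    rw [div_le_iff₀ (by positivity)]; nlinarith [(Nat.cast_nonneg n : (0 : ℝ) ≤ n)]
  have hU : (⋃ n : ℕ, Ioc (1 / ((n : ℝ) + 2)) ((n : ℝ) + 2)) = Ioi 0 := by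
    ext x
    simp only [mem_iUnion, mem_Ioc, mem_Ioi]
    constructor
    · rintro ⟨n, h1, _⟩
      exact lt_trans (by positivity) h1
    · intro hx
      obtain ⟨n, hn⟩ := exists_nat_gt (max x (1 / x))
      refine ⟨n, ?_, ?_⟩
      · have := (le_max_right x (1 / x)).trans_lt hn
        rw [div_lt_iff₀ (by positivity)]
        rw [div_lt_iff₀ hx] at this
        nlinarith
      · linarith [(le_max_left x (1 / x)).trans_lt hn]
  have := tendsto_setIntegral_of_monotone (μ := volume) (f := g)
    (s := fun n : ℕ => Ioc (1 / ((n : ℝ) + 2)) ((n : ℝ) + 2)) (fun n => measurableSet_Ioc)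
    (by
      intro i j hij
      have : (i : ℝ) ≤ j := by exact_mod_cast hij
      exact Ioc_subset_Ioc (one_div_le_one_div_of_le (by positivity) (by linarith)) (by linarith))
    (by rw [hU]; exact hg)
  rw [hU] at this
  refine this.congr (fun n => ?_)
  rw [intervalIntegral.integral_of_le (hlt n)]

/-- **Weighted logarithmic Sobolev inequality for inverse Gamma densities**
(Theorem 3.2). Let `β > 1`, `m > 0` and let `X` have the inverse Gamma density
`h_{β,m}(x) = C_{β,m} x^{−2β} e^{−m/x}` on `ℝ₊`. For every `α` with
`1 < α ≤ 3/2` and `α < β`, and every bounded smooth `φ` on `ℝ₊` with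
`Ent[φ²(X)]` finite,
`Ent[φ²(X)] ≤ (2/ρ_{β,α,m}) E[X^{2α}(φ'(X))²]`, where
`ρ_{β,α,m} = (1/2)((2β−α)/(3/2−α))^{3−2α} (m(2−α))^{2α−2} (α−1)^{5−4α}` for
`1 < α < 3/2` and `ρ_{β,α,m} = m/2` for `α = 3/2`
(whenever the right-hand side is finite). -/
theorem log_sobolev_inverse_gamma
    (β α m : ℝ) (hβ : 1 < β) (hm : 0 < m)
    (hα : 1 < α) (hα32 : α ≤ 3 / 2) (hαβ : α < β)
    (C : ℝ) (hC : 0 < C)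
    (hnorm : ∫ x in Ioi (0 : ℝ), C * x ^ (-(2 * β)) * Real.exp (-m / x) = 1)
    (φ : ℝ → ℝ) (hφ : ContDiffOn ℝ (⊤ : ℕ∞) φ (Ioi 0)) (hbdd : ∃ M, ∀ x ∈ Ioi (0 : ℝ), |φ x| ≤ M)
    (hint : IntegrableOn
      (fun x => φ x ^ 2 * (C * x ^ (-(2 * β)) * Real.exp (-m / x))) (Ioi 0))
    (hent : IntegrableOn
      (fun x => φ x ^ 2 * Real.log (φ x ^ 2) * (C * x ^ (-(2 * β)) * Real.exp (-m / x))) (Ioi 0))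
    (hrhs : IntegrableOn
      (fun x => x ^ (2 * α) * (deriv φ x) ^ 2 * (C * x ^ (-(2 * β)) * Real.exp (-m / x))) (Ioi 0)) :
    (∫ x in Ioi (0 : ℝ), φ x ^ 2 * Real.log (φ x ^ 2) *
          (C * x ^ (-(2 * β)) * Real.exp (-m / x)))
        - (∫ x in Ioi (0 : ℝ), φ x ^ 2 * (C * x ^ (-(2 * β)) * Real.exp (-m / x))) *
            Real.log (∫ x in Ioi (0 : ℝ), φ x ^ 2 * (C * x ^ (-(2 * β)) * Real.exp (-m / x)))
      ≤ (2 / (if α < 3 / 2 then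
              (1 / 2) * ((2 * β - α) / (3 / 2 - α)) ^ (3 - 2 * α) *
                (m * (2 - α)) ^ (2 * α - 2) * (α - 1) ^ (5 - 4 * α)
            else m / 2)) *
          ∫ x in Ioi (0 : ℝ), x ^ (2 * α) * (deriv φ x) ^ 2 *
            (C * x ^ (-(2 * β)) * Real.exp (-m / x)) := by
  have hρ := rho_pos β α m hm hα hα32 hαβ
  have hle := rho_le β α m hm hα hα32 hαβ
  generalize (if α < 3 / 2 then
              (1 / 2) * ((2 * β - α) / (3 / 2 - α)) ^ (3 - 2 * α) *
                (m * (2 - α)) ^ (2 * α - 2) * (α - 1) ^ (5 - 4 * α)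
            else m / 2) = ρ at hρ hle ⊢
  have hnint : IntegrableOn (fun x => C * x ^ (-(2 * β)) * Real.exp (-m / x)) (Ioi 0) := by
    by_contra hcon
    rw [integral_undef hcon] at hnorm
    exact zero_ne_one hnorm
  have key : ∀ n : ℕ, _ := fun n : ℕ => lsi_compact_sq β α m ρ C (1 / ((n : ℝ) + 2)) ((n : ℝ) + 2)
    hα hC hρ (by positivity)
    (by rw [div_lt_iff₀ (by positivity)]; nlinarith [(Nat.cast_nonneg n : (0 : ℝ) ≤ n)])
    hle _ rfl φ hφ
  have tA := tendsto_Ioi _ hent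
  have tc := tendsto_Ioi _ hint
  have tZ := tendsto_Ioi _ hnint
  have tR := (tendsto_Ioi _ hrhs).const_mul (2 / ρ)
  rw [hnorm] at tZ
  have tl := (Real.continuousAt_log one_ne_zero).tendsto.comp tZ
  have tm := (Real.continuous_mul_log.tendsto _).comp tc
  have := le_of_tendsto_of_tendsto' ((tA.sub tm).add (tc.mul tl)) tR key
  simpa using this
end

section
/- Let X be a random variable with an absolutely continuous density f(x) > 0 on an interval I = (i₋, i₊) ⊆ ℝ, distribution function F(x) = ∫_{i₋}^x f(y) dy, and median x̄ (i.e. F(x̄) = 1/2). Define K(x) = F(x)/f(x) for x ≤ x̄ and K(x) = (1−F(x))/f(x) for x ≥ x̄. Then for every 1 ≤ p < ∞ and every smooth function φ on I with E[|φ(X)|^p] finite, E[|φ(X) − E[φ(X)]|^p] ≤ (2p)^p E[K(X)^p |φ'(X)|^p]. -/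
open MeasureTheory Set

lemma wirt_young {p x y : ℝ} (hp : 1 ≤ p) (hx : 0 ≤ x) (hy : 0 ≤ y) :
    y * x ^ (p - 1) ≤ (1 / p) * y ^ p + (1 - 1 / p) * x ^ p := by
  have hp0 : 0 < p := by linarith
  have h1 : 1 / p ≤ 1 := by rw [div_le_one hp0]; exact hp
  have := Real.geom_mean_le_arith_mean2_weighted (w₁ := 1 / p) (w₂ := 1 - 1 / p)
    (p₁ := y ^ p) (p₂ := x ^ p) (by positivity) (by linarith) (by positivity) (by positivity)
    (by ring)
  rw [← Real.rpow_mul hy, ← Real.rpow_mul hx] at this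
  have e1 : p * (1 / p) = 1 := by field_simp
  have e2 : p * (1 - 1 / p) = p - 1 := by field_simp
  rwa [e1, e2, Real.rpow_one] at this

lemma wirt_hardy {a b p : ℝ} (hab : a ≤ b) (hp : 1 ≤ p) (f F g ψ : ℝ → ℝ)
    (hf : ContinuousOn f (Icc a b)) (hfpos : ∀ x ∈ Icc a b, 0 < f x)
    (hF : ∀ x ∈ Icc a b, HasDerivAt F (f x) x) (hF0 : ∀ x ∈ Icc a b, 0 ≤ F x)
    (hψ : ∀ x ∈ Icc a b, HasDerivAt ψ (g x) x) (hg : ContinuousOn g (Icc a b))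
    (hb : ψ b = 0) :
    ∫ x in a..b, |ψ x| ^ p * f x ≤ p ^ p * ∫ x in a..b, (F x / f x) ^ p * |g x| ^ p * f x := by
  have hp0 : 0 < p := by linarith
  have hu : uIcc a b = Icc a b := uIcc_of_le hab
  have hFc : ContinuousOn F (Icc a b) := fun x hx => (hF x hx).continuousAt.continuousWithinAt
  have hψc : ContinuousOn ψ (Icc a b) := fun x hx => (hψ x hx).continuousAt.continuousWithinAt
  have hga : ContinuousOn (fun x => |g x|) (Icc a b) := hg.abs
  have hgi : IntervalIntegrable (fun x => |g x|) volume a b :=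
    ContinuousOn.intervalIntegrable (by rwa [hu])
  set G : ℝ → ℝ := fun x => ∫ t in x..b, |g t| with hG
  have hsub : ∀ x ∈ Icc a b, Icc x b ⊆ Icc a b := fun x hx => Icc_subset_Icc_left hx.1
  have hGψ : ∀ x ∈ Icc a b, |ψ x| ≤ G x := by
    intro x hx
    have h1 : ∫ t in x..b, g t = ψ b - ψ x := by
      apply intervalIntegral.integral_eq_sub_of_hasDerivAt
      · intro t ht
        rw [uIcc_of_le hx.2] at ht
        exact hψ t (hsub x hx ht)
      · apply ContinuousOn.intervalIntegrable
        rw [uIcc_of_le hx.2]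
        exact hg.mono (hsub x hx)
    have h2 := intervalIntegral.abs_integral_le_integral_abs (f := g) (μ := volume) hx.2
    rw [h1, hb, zero_sub, abs_neg] at h2
    exact h2
  have hG0 : ∀ x ∈ Icc a b, 0 ≤ G x := fun x hx => (abs_nonneg _).trans (hGψ x hx)
  have hGc : ContinuousOn G (Icc a b) := by
    have := intervalIntegral.continuousOn_primitive_interval_left (f := fun x => |g x|)
      (μ := volume) (a := a) (b := b) (by rw [hu]; exact hga.integrableOn_Icc)
    rwa [hu] at this
  have hGd : ∀ x ∈ Ioo a b, HasDerivAt G (-|g x|) x := by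
    intro x hx
    have hn : Icc a b ∈ nhds x := Icc_mem_nhds hx.1 hx.2
    apply intervalIntegral.integral_hasDerivAt_left
    · apply ContinuousOn.intervalIntegrable
      rw [uIcc_of_le hx.2.le]
      exact hga.mono (hsub x (Ioo_subset_Icc_self hx))
    · exact (hga.mono Ioo_subset_Icc_self).stronglyMeasurableAtFilter isOpen_Ioo x hx
    · exact hga.continuousAt hn
  have hGpc : ContinuousOn (fun x => G x ^ p) (Icc a b) :=
    hGc.rpow_const (fun x hx => Or.inr hp0.le)
  have hGp1c : ContinuousOn (fun x => G x ^ (p - 1)) (Icc a b) :=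
    hGc.rpow_const (fun x hx => Or.inr (by linarith))
  have hKc : ContinuousOn (fun x => (F x / f x) ^ p) (Icc a b) :=
    (hFc.div hf (fun x hx => (hfpos x hx).ne')).rpow_const (fun x hx => Or.inr hp0.le)
  have hgpc : ContinuousOn (fun x => |g x| ^ p) (Icc a b) :=
    hga.rpow_const (fun x hx => Or.inr hp0.le)
  have ii : ∀ {h : ℝ → ℝ}, ContinuousOn h (Icc a b) → IntervalIntegrable h volume a b :=
    fun h => ContinuousOn.intervalIntegrable (by rwa [hu])
  have hGb : G b = 0 := by simp [hG]
  -- the boundary identity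
  have ibp : ∫ x in a..b, ((-|g x| * p * G x ^ (p - 1)) * F x + G x ^ p * f x)
      = G b ^ p * F b - G a ^ p * F a := by
    apply intervalIntegral.integral_eq_sub_of_hasDerivAt_of_le hab
      (f := fun x => G x ^ p * F x) (hGpc.mul hFc)
    · intro x hx
      exact ((hGd x hx).rpow_const (Or.inr hp)).mul (hF x (Ioo_subset_Icc_self hx))
    · apply ii
      fun_prop
  have hbd : ∫ x in a..b, ((-|g x| * p * G x ^ (p - 1)) * F x + G x ^ p * f x) ≤ 0 := by
    rw [ibp, hGb, Real.zero_rpow hp0.ne']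
    have ha : a ∈ Icc a b := ⟨le_rfl, hab⟩
    have := mul_nonneg (Real.rpow_nonneg (hG0 a ha) p) (hF0 a ha)
    linarith
  have key : ∫ x in a..b, ((1 / p) * (G x ^ p * f x)
        - (1 / p) * p ^ p * ((F x / f x) ^ p * |g x| ^ p * f x))
      ≤ ∫ x in a..b, ((-|g x| * p * G x ^ (p - 1)) * F x + G x ^ p * f x) := by
    apply intervalIntegral.integral_mono_on hab
    · apply ii; fun_prop
    · apply ii; fun_prop
    intro x hx
    have hfx := hfpos x hx
    have hK0 : 0 ≤ F x / f x := div_nonneg (hF0 x hx) hfx.le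
    have hy := wirt_young (p := p) (x := G x) (y := p * ((F x / f x) * |g x|)) hp (hG0 x hx)
      (by positivity)
    rw [Real.mul_rpow hp0.le (by positivity), Real.mul_rpow hK0 (abs_nonneg _)] at hy
    have h3 := mul_le_mul_of_nonneg_right hy hfx.le
    have h4 : p * ((F x / f x) * |g x|) * G x ^ (p - 1) * f x
        = |g x| * p * G x ^ (p - 1) * F x := by field_simp
    rw [h4] at h3
    nlinarith [h3]
  rw [intervalIntegral.integral_sub (by apply ii; fun_prop) (by apply ii; fun_prop),
    intervalIntegral.integral_const_mul, intervalIntegral.integral_const_mul] at key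
  have h5 : ∫ x in a..b, |ψ x| ^ p * f x ≤ ∫ x in a..b, G x ^ p * f x := by
    have : ContinuousOn (fun x => |ψ x| ^ p) (Icc a b) :=
      hψc.abs.rpow_const (fun x hx => Or.inr hp0.le)
    apply intervalIntegral.integral_mono_on hab
    · apply ii; fun_prop
    · apply ii; fun_prop
    intro x hx
    exact mul_le_mul_of_nonneg_right
      (Real.rpow_le_rpow (abs_nonneg _) (hGψ x hx) hp0.le) (hfpos x hx).le
  refine h5.trans ?_
  have h6 := key.trans hbd
  have h7 : (1 / p) * ((∫ x in a..b, G x ^ p * f x)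
      - p ^ p * ∫ x in a..b, (F x / f x) ^ p * |g x| ^ p * f x) ≤ 0 := by linarith
  by_contra hcon
  push Not at hcon
  have : 0 < (1 / p) * ((∫ x in a..b, G x ^ p * f x)
      - p ^ p * ∫ x in a..b, (F x / f x) ^ p * |g x| ^ p * f x) :=
    mul_pos (by positivity) (by linarith)
  linarith

lemma wirt_exhaust (ia ib : EReal) (c : ℝ) (h1 : ia < c) (h2 : (c : EReal) < ib) :
    ∃ a b : ℕ → ℝ, (∀ n, ia < a n ∧ a n < c ∧ c < b n ∧ (b n : EReal) < ib) ∧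
      ∀ x : ℝ, ia < x → (x : EReal) < ib → ∀ᶠ n in Filter.atTop, x ∈ Icc (a n) (b n) := by
  obtain ⟨u, -, hu, hut⟩ := exists_seq_strictAnti_tendsto' h1
  obtain ⟨v, -, hv, hvt⟩ := exists_seq_strictMono_tendsto' h2
  have cu : ∀ n, (((u n).toReal : ℝ) : EReal) = u n := fun n =>
    EReal.coe_toReal ((hu n).2.trans (EReal.coe_lt_top c)).ne ((bot_le.trans_lt (hu n).1).ne')
  have cv : ∀ n, (((v n).toReal : ℝ) : EReal) = v n := fun n =>
    EReal.coe_toReal ((hv n).2.trans_le le_top).ne (((EReal.bot_lt_coe c).trans (hv n).1).ne')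
  refine ⟨fun n => (u n).toReal, fun n => (v n).toReal, fun n => ⟨?_, ?_, ?_, ?_⟩, ?_⟩
  · rw [cu]; exact (hu n).1
  · rw [← EReal.coe_lt_coe_iff, cu]; exact (hu n).2
  · rw [← EReal.coe_lt_coe_iff, cv]; exact (hv n).1
  · rw [cv]; exact (hv n).2
  · intro x hx1 hx2
    filter_upwards [hut.eventually_lt_const hx1, hvt.eventually_const_lt hx2] with n h3 h4
    refine ⟨?_, ?_⟩
    · rw [← EReal.coe_le_coe_iff, cu]; exact h3.le
    · rw [← EReal.coe_le_coe_iff, cv]; exact h4.le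

lemma wirt_convex {p x y : ℝ} (hp : 1 ≤ p) :
    |x - y| ^ p ≤ 2 ^ (p - 1) * (|x| ^ p + |y| ^ p) := by
  refine (Real.rpow_le_rpow (abs_nonneg _) (abs_sub x y) (by linarith)).trans ?_
  exact_mod_cast NNReal.rpow_add_le_mul_rpow_add_rpow ⟨|x|, abs_nonneg x⟩ ⟨|y|, abs_nonneg y⟩ hp

theorem wirtinger_with_weight
    (ia ib : EReal) (hii : ia < ib)
    (I : Set ℝ) (hI : I = {x : ℝ | ia < (x : EReal) ∧ (x : EReal) < ib})
    (f : ℝ → ℝ) (hfcont : ContinuousOn f I) (hfpos : ∀ x ∈ I, 0 < f x)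
    (hfprob : ∫ x in I, f x = 1)
    (F : ℝ → ℝ) (hF : ∀ x, F x = ∫ y in I ∩ Iio x, f y)
    (xbar : ℝ) (hxbar : xbar ∈ I) (hmedian : F xbar = 1 / 2)
    (K : ℝ → ℝ) (hK : ∀ x, K x = if x ≤ xbar then F x / f x else (1 - F x) / f x)
    (p : ℝ) (hp : 1 ≤ p)
    (φ : ℝ → ℝ) (hφ : ContDiffOn ℝ (⊤ : ℕ∞) φ I)
    (hlhs : IntegrableOn (fun x => |φ x| ^ p * f x) I)
    (hrhs : IntegrableOn (fun x => K x ^ p * |deriv φ x| ^ p * f x) I) :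
    (∫ x in I, |φ x - ∫ y in I, φ y * f y| ^ p * f x)
      ≤ (2 * p) ^ p * ∫ x in I, K x ^ p * |deriv φ x| ^ p * f x := by
  have hp0 : 0 < p := by linarith
  have hIo : IsOpen I := by
    rw [hI]
    exact (isOpen_lt continuous_const continuous_coe_real_ereal).inter
      (isOpen_lt continuous_coe_real_ereal continuous_const)
  have hIm : MeasurableSet I := hIo.measurableSet
  have hfi : IntegrableOn f I := by
    by_contra h
    rw [integral_undef h] at hfprob
    exact zero_ne_one hfprob
  have hφd : ∀ x ∈ I, HasDerivAt φ (deriv φ x) x := fun x hx =>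
    ((hφ.differentiableOn (by simp)).differentiableAt (hIo.mem_nhds hx)).hasDerivAt
  have hφc : ContinuousOn φ I := hφ.continuousOn
  have hφ'c : ContinuousOn (deriv φ) I := hφ.continuousOn_deriv_of_isOpen hIo (by simp)
  have hf0 : ∀ᵐ x ∂volume.restrict I, 0 ≤ f x := by
    filter_upwards [ae_restrict_mem hIm] with x hx using (hfpos x hx).le
  have hF0 : ∀ x, 0 ≤ F x := by
    intro x
    rw [hF]
    exact setIntegral_nonneg (hIm.inter measurableSet_Iio) (fun y hy => (hfpos y hy.1).le)
  have hF1 : ∀ x, F x ≤ 1 := by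
    intro x
    rw [hF, ← hfprob]
    exact setIntegral_mono_set hfi hf0 (Filter.Eventually.of_forall inter_subset_left)
  have hFd : ∀ x ∈ I, HasDerivAt F (f x) x := by
    intro x hx
    set h : ℝ → ℝ := I.indicator f with hh
    have hhi : Integrable h := (integrable_indicator_iff hIm).2 hfi
    have hFh : ∀ y, F y = F xbar + ∫ t in xbar..y, h t := by
      have e : ∀ y, F y = ∫ t in Iic y, h t := by
        intro y
        rw [hF, hh, integral_Iic_eq_integral_Iio, setIntegral_indicator hIm, inter_comm]
      intro y
      rw [e, e, ← intervalIntegral.integral_Iic_sub_Iic hhi.integrableOn hhi.integrableOn]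
      ring
    have hcx : h =ᶠ[nhds x] f := by
      filter_upwards [hIo.mem_nhds hx] with y hy using indicator_of_mem hy f
    have hca : ContinuousAt h x := (hfcont.continuousAt (hIo.mem_nhds hx)).congr hcx.symm
    have := (intervalIntegral.integral_hasDerivAt_right (a := xbar)
      hhi.intervalIntegrable
      hhi.aestronglyMeasurable.stronglyMeasurableAtFilter hca).const_add (F xbar)
    rw [hcx.eq_of_nhds] at this
    exact this.congr_of_eventuallyEq (Filter.Eventually.of_forall hFh)
  have hK0 : ∀ x ∈ I, 0 ≤ K x := by
    intro x hx
    rw [hK]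
    split_ifs
    · exact div_nonneg (hF0 x) (hfpos x hx).le
    · exact div_nonneg (by linarith [hF1 x]) (hfpos x hx).le
  have hB0 : ∀ x ∈ I, 0 ≤ K x ^ p * |deriv φ x| ^ p * f x := fun x hx =>
    mul_nonneg (mul_nonneg (Real.rpow_nonneg (hK0 x hx) _) (by positivity)) (hfpos x hx).le
  -- integrability
  have hint : ∀ c : ℝ, IntegrableOn (fun x => |φ x - c| ^ p * f x) I := by
    intro c
    have hc : ContinuousOn (fun x => |φ x - c| ^ p * f x) I :=
      ((hφc.sub continuousOn_const).abs.rpow_const (fun x hx => Or.inr hp0.le)).mul hfcont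
    refine Integrable.mono' (((hlhs.add (hfi.const_mul (|c| ^ p))).const_mul (2 ^ (p - 1))))
      (hc.aestronglyMeasurable hIm) ?_
    filter_upwards [hf0] with x hx
    rw [Real.norm_of_nonneg (by positivity)]
    have := mul_le_mul_of_nonneg_right (wirt_convex (x := φ x) (y := c) hp) hx
    simp only [Pi.add_apply]
    linarith
  set c := φ xbar with hcdef
  have habs : IntegrableOn (fun x => |φ x - c| * f x) I := by
    have hc : ContinuousOn (fun x => |φ x - c| * f x) I :=
      ((hφc.sub continuousOn_const).abs).mul hfcont
    refine Integrable.mono' ((hint c).add hfi) (hc.aestronglyMeasurable hIm) ?_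
    filter_upwards [hf0] with x hx
    rw [Real.norm_of_nonneg (by positivity)]
    have h1 : |φ x - c| ≤ |φ x - c| ^ p + 1 := by
      rcases le_total 1 |φ x - c| with h | h
      · have := Real.rpow_le_rpow_of_exponent_le h hp
        rw [Real.rpow_one] at this
        linarith
      · have : 0 ≤ |φ x - c| ^ p := by positivity
        linarith
    have := mul_le_mul_of_nonneg_right h1 hx
    simp only [Pi.add_apply]
    linarith
  have hsi : IntegrableOn (fun x => (φ x - c) * f x) I := by
    have hc : ContinuousOn (fun x => (φ x - c) * f x) I :=
      (hφc.sub continuousOn_const).mul hfcont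
    refine Integrable.mono' habs (hc.aestronglyMeasurable hIm) ?_
    filter_upwards [hf0] with x hx
    rw [norm_mul, Real.norm_eq_abs, Real.norm_of_nonneg hx]
  set A := ∫ x in I, |φ x - c| ^ p * f x with hA
  set B := ∫ x in I, K x ^ p * |deriv φ x| ^ p * f x with hB
  set m := ∫ y in I, φ y * f y with hm
  -- Jensen
  have hmc : m - c = ∫ x in I, (φ x - c) * f x := by
    have : ∫ x in I, φ x * f x = ∫ x in I, ((φ x - c) * f x + c * f x) := by
      congr 1; ext x; ring
    rw [hm, this, integral_add hsi (hfi.const_mul c), integral_const_mul, hfprob]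
    ring
  set M := ∫ x in I, |φ x - c| * f x with hM
  have hM0 : 0 ≤ M := integral_nonneg_of_ae (by
    filter_upwards [hf0] with x hx
    exact mul_nonneg (abs_nonneg _) hx)
  have hmM : |m - c| ≤ M := by
    rw [hmc, hM, ← Real.norm_eq_abs]
    refine norm_integral_le_of_norm_le habs ?_
    filter_upwards [hf0] with x hx
    rw [norm_mul, Real.norm_eq_abs, Real.norm_of_nonneg hx]
  have hMA : M ^ p ≤ A := by
    have h1 : ∫ x in I, M ^ (p - 1) * (|φ x - c| * f x)
        ≤ ∫ x in I, ((1 / p) * (|φ x - c| ^ p * f x) + ((1 - 1 / p) * M ^ p) * f x) := by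
      refine integral_mono_ae (habs.const_mul _)
        (((hint c).const_mul _).add (hfi.const_mul _)) ?_
      filter_upwards [hf0] with x hx
      have := mul_le_mul_of_nonneg_right (wirt_young hp hM0 (abs_nonneg (φ x - c))) hx
      linarith
    rw [integral_const_mul, integral_add ((hint c).const_mul _) (hfi.const_mul _),
      integral_const_mul, integral_const_mul, hfprob, ← hM, ← hA] at h1
    have h2 : M ^ (p - 1) * M = M ^ p := by
      rcases hM0.eq_or_lt with h | h
      · rw [← h, Real.zero_rpow hp0.ne', mul_zero]
      · rw [← Real.rpow_add_one h.ne', sub_add_cancel]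
    rw [h2] at h1
    have h3 : (1 / p) * (M ^ p) ≤ (1 / p) * A := by linarith
    exact le_of_mul_le_mul_left h3 (by positivity)
  have hmA : |m - c| ^ p ≤ A := (Real.rpow_le_rpow (abs_nonneg _) hmM hp0.le).trans hMA
  have hstep1 : (∫ x in I, |φ x - m| ^ p * f x) ≤ 2 ^ p * A := by
    have h1 : (∫ x in I, |φ x - m| ^ p * f x) ≤
        ∫ x in I, (2 ^ (p - 1) * (|φ x - c| ^ p * f x) + (2 ^ (p - 1) * |m - c| ^ p) * f x) := by
      refine integral_mono_ae (hint m) (((hint c).const_mul _).add (hfi.const_mul _)) ?_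
      filter_upwards [hf0] with x hx
      have := mul_le_mul_of_nonneg_right (wirt_convex (x := φ x - c) (y := m - c) hp) hx
      rw [sub_sub_sub_cancel_right] at this
      linarith
    rw [integral_add ((hint c).const_mul _) (hfi.const_mul _),
      integral_const_mul, integral_const_mul, hfprob, ← hA] at h1
    have h2 : (2 : ℝ) ^ p = 2 ^ (p - 1) * 2 := by
      rw [← Real.rpow_add_one (by norm_num), sub_add_cancel]
    have h3 : (0 : ℝ) < 2 ^ (p - 1) := by positivity
    rw [h2]
    nlinarith [mul_le_mul_of_nonneg_left hmA h3.le]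
  -- Hardy
  have hAB : A ≤ p ^ p * B := by
    have hx' := hxbar
    rw [hI] at hx'
    obtain ⟨a, b, hab, hcov⟩ := wirt_exhaust ia ib xbar hx'.1 hx'.2
    have hcover : AECover (volume.restrict I) Filter.atTop (fun n => Icc (a n) (b n)) := by
      refine ⟨?_, fun n => measurableSet_Icc⟩
      filter_upwards [ae_restrict_mem hIm] with x hx
      rw [hI] at hx
      exact hcov x hx.1 hx.2
    refine le_of_tendsto (hcover.integral_tendsto_of_countably_generated (hint c))
      (Filter.Eventually.of_forall fun n => ?_)
    obtain ⟨h1, h2, h3, h4⟩ := hab n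
    have hsub : Icc (a n) (b n) ⊆ I := by
      intro x hx
      rw [hI]
      exact ⟨h1.trans_le (EReal.coe_le_coe_iff.2 hx.1),
        (EReal.coe_le_coe_iff.2 hx.2).trans_lt h4⟩
    have hsl : Icc (a n) xbar ⊆ I := (Icc_subset_Icc_right h3.le).trans hsub
    have hsr : Icc xbar (b n) ⊆ I := (Icc_subset_Icc_left h2.le).trans hsub
    rw [Measure.restrict_restrict measurableSet_Icc, inter_eq_left.2 hsub]
    have left := wirt_hardy (a := a n) (b := xbar) h2.le hp f F (deriv φ) (fun x => φ x - c)
      (hfcont.mono hsl) (fun x hx => hfpos x (hsl hx)) (fun x hx => hFd x (hsl hx))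
      (fun x _ => hF0 x) (fun x hx => (hφd x (hsl hx)).sub_const c) (hφ'c.mono hsl) (sub_self _)
    have hneg : ∀ x ∈ Icc (-(b n)) (-xbar), -x ∈ Icc xbar (b n) := fun x hx =>
      ⟨by linarith [hx.2], by linarith [hx.1]⟩
    have right := wirt_hardy (a := -(b n)) (b := -xbar) (by linarith) hp (fun x => f (-x))
      (fun x => 1 - F (-x)) (fun x => -deriv φ (-x)) (fun x => φ (-x) - c)
      ((hfcont.mono hsr).comp continuousOn_neg hneg) (fun x hx => hfpos _ (hsr (hneg x hx)))
      (fun x hx => by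
        have := ((hFd _ (hsr (hneg x hx))).comp x (hasDerivAt_neg x)).const_sub 1
        simpa using this)
      (fun x _ => by linarith [hF1 (-x)])
      (fun x hx => by
        have := ((hφd _ (hsr (hneg x hx))).comp x (hasDerivAt_neg x)).sub_const c
        simpa using this)
      (((hφ'c.mono hsr).comp continuousOn_neg hneg).neg) (by simp [hcdef])
    simp only [abs_neg] at right
    rw [intervalIntegral.integral_comp_neg (fun x => |φ x - c| ^ p * f x),
      intervalIntegral.integral_comp_neg
        (fun x => ((1 - F x) / f x) ^ p * |deriv φ x| ^ p * f x), neg_neg, neg_neg] at right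
    have eL : ∫ x in (a n)..xbar, (F x / f x) ^ p * |deriv φ x| ^ p * f x
        = ∫ x in (a n)..xbar, K x ^ p * |deriv φ x| ^ p * f x := by
      apply intervalIntegral.integral_congr
      intro x hx
      rw [uIcc_of_le h2.le] at hx
      simp only [hK x, if_pos hx.2]
    have eR : ∫ x in xbar..(b n), ((1 - F x) / f x) ^ p * |deriv φ x| ^ p * f x
        = ∫ x in xbar..(b n), K x ^ p * |deriv φ x| ^ p * f x := by
      rw [intervalIntegral.integral_of_le h3.le, intervalIntegral.integral_of_le h3.le]
      apply setIntegral_congr_fun measurableSet_Ioc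
      intro x hx
      simp only [hK x, if_neg (not_le.2 hx.1)]
    rw [eL] at left
    rw [eR] at right
    have iiv : ∀ {h : ℝ → ℝ} {s t : ℝ}, s ≤ t → Icc s t ⊆ I → IntegrableOn h I →
        IntervalIntegrable h volume s t := by
      intro h s t hst hs hh
      rw [intervalIntegrable_iff_integrableOn_Icc_of_le hst]
      exact hh.mono_set hs
    have sA := intervalIntegral.integral_add_adjacent_intervals
      (iiv h2.le hsl (hint c)) (iiv h3.le hsr (hint c))
    have sB := intervalIntegral.integral_add_adjacent_intervals
      (iiv h2.le hsl hrhs) (iiv h3.le hsr hrhs)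
    have hle : ∫ x in (a n)..(b n), K x ^ p * |deriv φ x| ^ p * f x ≤ B := by
      rw [intervalIntegral.integral_of_le (h2.trans h3).le, ← integral_Icc_eq_integral_Ioc]
      refine setIntegral_mono_set hrhs ?_ (Filter.Eventually.of_forall hsub)
      filter_upwards [ae_restrict_mem hIm] with x hx using hB0 x hx
    rw [integral_Icc_eq_integral_Ioc, ← intervalIntegral.integral_of_le (h2.trans h3).le, ← sA]
    have hpp : 0 ≤ p ^ p := by positivity
    calc _ ≤ p ^ p * ∫ x in (a n)..(b n), K x ^ p * |deriv φ x| ^ p * f x := by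
          rw [← sB]; linarith
      _ ≤ _ := mul_le_mul_of_nonneg_left hle hpp
  calc _ ≤ 2 ^ p * A := hstep1
    _ ≤ 2 ^ p * (p ^ p * B) := mul_le_mul_of_nonneg_left hAB (by positivity)
    _ = _ := by rw [Real.mul_rpow (by norm_num) hp0.le]; ring
end

section
/- Let X be a random variable with an absolutely continuous density f(x) > 0 on an interval I = (i₋, i₊) ⊆ ℝ, distribution function F, median x̄, and weight K(x) = F(x)/f(x) for x ≤ x̄, K(x) = (1−F(x))/f(x) for x ≥ x̄. Then for every 1 ≤ p < ∞ and every smooth function φ on I with φ(x̄) = 0 and E[|φ(X)|^p] finite, E[|φ(X)|^p] ≤ p^p E[K(X)^p |φ'(X)|^p]. -/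
open MeasureTheory Set

lemma aux_young (p a b : ℝ) (hp : 1 ≤ p) (ha : 0 ≤ a) (hb : 0 ≤ b) :
    a ^ (p - 1) * (p * b) ≤ (1 - 1 / p) * a ^ p + (1 / p) * (p ^ p * b ^ p) := by
  have hp0 : 0 < p := by linarith
  have h1 : 1 / p ≤ 1 := by rw [div_le_one hp0]; exact hp
  have := Real.geom_mean_le_arith_mean2_weighted (w₁ := 1 - 1 / p) (w₂ := 1 / p)
    (p₁ := a ^ p) (p₂ := (p * b) ^ p) (by linarith) (by positivity) (by positivity)
    (by positivity) (by ring)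
  rw [← Real.rpow_mul ha, ← Real.rpow_mul (by positivity : 0 ≤ p * b),
    mul_one_div_cancel hp0.ne', Real.rpow_one, Real.mul_rpow hp0.le hb, mul_sub, mul_one_div_cancel hp0.ne', mul_one] at this
  exact this

lemma aux_abs (φ : ℝ → ℝ) (x v : ℝ) (h : HasDerivAt φ v x) :
    ∃ d, d ≤ |v| ∧ HasDerivWithinAt (fun y => |φ y|) d (Ioi x) x := by
  by_cases h0 : φ x = 0
  · refine ⟨|v|, le_rfl, ?_⟩
    have h1 := h.hasDerivWithinAt (s := Ioi x)
    rw [hasDerivWithinAt_iff_tendsto_slope' (by simp)] at h1 ⊢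
    refine h1.abs.congr' ?_
    filter_upwards [self_mem_nhdsWithin] with y hy
    have hy' : 0 < y - x := sub_pos.2 hy
    simp only [slope_def_field, h0, abs_zero, sub_zero, abs_div, abs_of_pos hy']
  · rcases lt_or_gt_of_ne h0 with h2 | h2
    · refine ⟨-v, neg_le_abs v, ?_⟩
      refine (h.neg.congr_of_eventuallyEq ?_).hasDerivWithinAt
      filter_upwards [h.continuousAt.eventually_lt continuousAt_const h2] with y hy
      simp [abs_of_neg hy]
    · refine ⟨v, le_abs_self v, ?_⟩
      refine (h.congr_of_eventuallyEq ?_).hasDerivWithinAt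
      filter_upwards [continuousAt_const.eventually_lt h.continuousAt h2] with y hy
      simp [abs_of_pos hy]

lemma aux_half (m : ℝ) (ib : EReal) (hm : (m : EReal) < ib) (f G φ : ℝ → ℝ) (p : ℝ) (hp : 1 ≤ p)
    (hf : ∀ x : ℝ, m ≤ x → (x : EReal) < ib → 0 < f x)
    (hG0 : ∀ x : ℝ, m ≤ x → (x : EReal) < ib → 0 ≤ G x)
    (hG : ∀ x : ℝ, m ≤ x → (x : EReal) < ib → HasDerivAt G (-f x) x)
    (hφ : ∀ x : ℝ, m ≤ x → (x : EReal) < ib → HasDerivAt φ (deriv φ x) x)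
    (h0 : φ m = 0)
    (hD : IntegrableOn (fun x => p ^ p * ((G x / f x) ^ p * |deriv φ x| ^ p * f x) - |φ x| ^ p * f x)
      {x : ℝ | m < x ∧ (x : EReal) < ib}) :
    0 ≤ ∫ x in {x : ℝ | m < x ∧ (x : EReal) < ib},
      (p ^ p * ((G x / f x) ^ p * |deriv φ x| ^ p * f x) - |φ x| ^ p * f x) := by
  have hp0 : 0 < p := by linarith
  obtain ⟨u, hu, hum, hut⟩ := exists_seq_strictMono_tendsto' hm
  have hreal : ∀ n, (((u n).toReal : ℝ) : EReal) = u n := fun n =>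
    EReal.coe_toReal (ne_top_of_lt (hum n).2) (ne_bot_of_gt (hum n).1)
  set c : ℕ → ℝ := fun n => (u n).toReal with hc
  have hcm : ∀ n, m < c n := fun n => by
    have := (hum n).1; rw [← hreal n] at this; exact_mod_cast this
  have hcb : ∀ n, (c n : EReal) < ib := fun n => by
    have := (hum n).2; rw [← hreal n] at this; exact this
  have hcmono : Monotone c := fun i j hij => by
    have := hu.monotone hij; rw [← hreal i, ← hreal j] at this; exact_mod_cast this
  have hset : {x : ℝ | m < x ∧ (x : EReal) < ib} = ⋃ n, Ioc m (c n) := by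
    ext x
    simp only [mem_ofPred_eq, mem_iUnion, mem_Ioc]
    constructor
    · rintro ⟨h1, h2⟩
      obtain ⟨n, hn⟩ := (hut.eventually_const_lt h2).exists
      refine ⟨n, h1, ?_⟩
      rw [← hreal n] at hn; exact_mod_cast hn.le
    · rintro ⟨n, h1, h2⟩
      exact ⟨h1, lt_of_le_of_lt (by exact_mod_cast h2) (hcb n)⟩
  have hsub : ∀ n, Ioc m (c n) ⊆ {x : ℝ | m < x ∧ (x : EReal) < ib} := fun n => by
    rw [hset]; exact subset_iUnion (fun n => Ioc m (c n)) n
  have hlim := tendsto_setIntegral_of_monotone (μ := volume)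
    (f := fun x => p ^ p * ((G x / f x) ^ p * |deriv φ x| ^ p * f x) - |φ x| ^ p * f x)
    (s := fun n => Ioc m (c n)) (fun n => measurableSet_Ioc)
    (fun i j hij => Ioc_subset_Ioc_right (hcmono hij)) (by rw [← hset]; exact hD)
  rw [hset]
  refine ge_of_tendsto' hlim fun n => ?_
  have hle : ∀ x ≤ c n, (x : EReal) < ib := fun x hx =>
    lt_of_le_of_lt (by exact_mod_cast hx) (hcb n)
  have hex : ∀ x, m ≤ x → x ≤ c n → ∃ d, d ≤ |deriv φ x| ∧
      HasDerivWithinAt (fun y => |φ y|) d (Ioi x) x := fun x h1 h2 =>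
    aux_abs φ x _ (hφ x h1 (hle x h2))
  choose! d hd1 hd2 using hex
  have key := intervalIntegral.sub_le_integral_of_hasDeriv_right_of_le (a := m) (b := c n)
    (g := fun y => |φ y| ^ p * G y)
    (g' := fun x => (d x * p * |φ x| ^ (p - 1)) * G x + |φ x| ^ p * (-f x))
    (φ := fun x => (1 / p) *
      (p ^ p * ((G x / f x) ^ p * |deriv φ x| ^ p * f x) - |φ x| ^ p * f x))
    (hcm n).le ?_ ?_ ?_ ?_
  · rw [intervalIntegral.integral_const_mul, intervalIntegral.integral_of_le (hcm n).le] at key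
    have h1 : 0 ≤ |φ (c n)| ^ p * G (c n) :=
      mul_nonneg (by positivity) (hG0 _ (hcm n).le (hcb n))
    simp only [h0, abs_zero, Real.zero_rpow hp0.ne', zero_mul, sub_zero] at key
    have h2 := h1.trans key
    exact nonneg_of_mul_nonneg_right h2 (by positivity)
  · intro x hx
    refine ContinuousAt.continuousWithinAt ?_
    refine ContinuousAt.mul ?_ (hG x hx.1 (hle x hx.2)).continuousAt
    exact (hφ x hx.1 (hle x hx.2)).continuousAt.abs.rpow_const (Or.inr hp0.le)
  · intro x hx
    exact ((hd2 x hx.1.le hx.2.le).rpow_const (Or.inr hp)).mul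
      (hG x hx.1.le (hle x hx.2.le)).hasDerivWithinAt
  · rw [integrableOn_Icc_iff_integrableOn_Ioc]
    exact (hD.mono_set (hsub n)).const_mul _
  · intro x hx
    have hfx := hf x hx.1.le (hle x hx.2.le)
    have hGx := hG0 x hx.1.le (hle x hx.2.le)
    have hk : 0 ≤ G x / f x := by positivity
    have hy := aux_young p |φ x| (G x / f x * |deriv φ x|) hp (abs_nonneg _) (by positivity)
    rw [Real.mul_rpow hk (abs_nonneg _)] at hy
    have e : G x = G x / f x * f x := by field_simp
    have h1 : d x * p * |φ x| ^ (p - 1) * G x ≤ |φ x| ^ (p - 1) * (p * (G x / f x * |deriv φ x|)) * f x := by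
      calc _ ≤ |deriv φ x| * p * |φ x| ^ (p - 1) * G x := by
            gcongr; exact hd1 x hx.1.le hx.2.le
        _ = |deriv φ x| * p * |φ x| ^ (p - 1) * (G x / f x * f x) := by rw [← e]
        _ = _ := by ring
    have h2 := mul_le_mul_of_nonneg_right hy hfx.le
    calc _ ≤ ((1 - 1 / p) * |φ x| ^ p + 1 / p * (p ^ p * ((G x / f x) ^ p * |deriv φ x| ^ p))) * f x
        + |φ x| ^ p * (-f x) := add_le_add (h1.trans h2) le_rfl
      _ = _ := by ring

/-- **Wirtinger-type inequality with weight, for functions vanishing at the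
median** (inequality (4.7)). Let `X` have an absolutely continuous density
`f > 0` on the open interval `I = (ia, ib) ⊆ ℝ`, with distribution function `F`,
median `xbar` (`F(xbar) = 1/2`), and weight `K(x) = F(x)/f(x)` for `x ≤ xbar`,
`K(x) = (1−F(x))/f(x)` for `x ≥ xbar`. Then for every `1 ≤ p < ∞` and every
smooth `φ` on `I` with `φ(xbar) = 0` and `E[|φ(X)|^p]` finite,
`E[|φ(X)|^p] ≤ p^p E[K(X)^p |φ'(X)|^p]`
(whenever the right-hand side is finite). -/
theorem wirtinger_with_weight_vanishing_at_median
    (ia ib : EReal) (hii : ia < ib)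
    (I : Set ℝ) (hI : I = {x : ℝ | ia < (x : EReal) ∧ (x : EReal) < ib})
    (f : ℝ → ℝ) (hfcont : ContinuousOn f I) (hfpos : ∀ x ∈ I, 0 < f x)
    (hfprob : ∫ x in I, f x = 1)
    (F : ℝ → ℝ) (hF : ∀ x, F x = ∫ y in I ∩ Iio x, f y)
    (xbar : ℝ) (hxbar : xbar ∈ I) (hmedian : F xbar = 1 / 2)
    (K : ℝ → ℝ) (hK : ∀ x, K x = if x ≤ xbar then F x / f x else (1 - F x) / f x)
    (p : ℝ) (hp : 1 ≤ p)
    (φ : ℝ → ℝ) (hφ : ContDiffOn ℝ (⊤ : ℕ∞) φ I) (hφ0 : φ xbar = 0)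
    (hlhs : IntegrableOn (fun x => |φ x| ^ p * f x) I)
    (hrhs : IntegrableOn (fun x => K x ^ p * |deriv φ x| ^ p * f x) I) :
    (∫ x in I, |φ x| ^ p * f x)
      ≤ p ^ p * ∫ x in I, K x ^ p * |deriv φ x| ^ p * f x := by
  have hp0 : 0 < p := by linarith
  have hIo : IsOpen I := by
    rw [hI]
    exact (isOpen_lt continuous_const continuous_coe_real_ereal).inter
      (isOpen_lt continuous_coe_real_ereal continuous_const)
  have hIm : MeasurableSet I := hIo.measurableSet
  have hfint : IntegrableOn f I := by
    by_contra h
    rw [integral_undef h] at hfprob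
    exact zero_ne_one hfprob
  have hF' : ∀ x, F x = ∫ y in Iic x, I.indicator f y := fun x => by
    rw [hF, integral_Iic_eq_integral_Iio, setIntegral_indicator hIm, inter_comm]
  have hgint : Integrable (I.indicator f) := (integrable_indicator_iff hIm).2 hfint
  have hFd : ∀ x ∈ I, HasDerivAt F (f x) x := by
    intro x hx
    have hFe : F = fun y => F xbar + ∫ t in xbar..y, I.indicator f t := by
      funext y
      rw [← intervalIntegral.integral_Iic_sub_Iic hgint.integrableOn hgint.integrableOn,
        ← hF', ← hF']; ring
    have hev : I.indicator f =ᶠ[nhds x] f := by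
      filter_upwards [hIo.mem_nhds hx] with y hy
      exact indicator_of_mem hy f
    have hca : ContinuousAt (I.indicator f) x :=
      (hfcont.continuousAt (hIo.mem_nhds hx)).congr hev.symm
    have h := intervalIntegral.integral_hasDerivAt_right (a := xbar) (b := x)
      hgint.intervalIntegrable hgint.aestronglyMeasurable.stronglyMeasurableAtFilter hca
    rw [indicator_of_mem hx] at h
    rw [hFe]
    exact h.const_add _
  have hg0 : ∀ x, 0 ≤ I.indicator f x := fun x => indicator_nonneg (fun y hy => (hfpos y hy).le) x
  have hF0 : ∀ x, 0 ≤ F x := fun x => by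
    rw [hF']; exact integral_nonneg hg0
  have hF1 : ∀ x, F x ≤ 1 := fun x => by
    rw [hF', ← hfprob, ← integral_indicator hIm]
    exact setIntegral_le_integral hgint (Filter.Eventually.of_forall hg0)
  have hφd : ∀ x ∈ I, HasDerivAt φ (deriv φ x) x := fun x hx =>
    ((hφ.differentiableOn (by simp)).differentiableAt (hIo.mem_nhds hx)).hasDerivAt
  set D : ℝ → ℝ := fun x => p ^ p * (K x ^ p * |deriv φ x| ^ p * f x) - |φ x| ^ p * f x with hDdef
  have hDint : IntegrableOn D I := (hrhs.const_mul _).sub hlhs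
  have hmI : ia < (xbar : EReal) ∧ (xbar : EReal) < ib := by rw [hI] at hxbar; exact hxbar
  have hR : ∀ x : ℝ, xbar ≤ x → (x : EReal) < ib → x ∈ I := fun x h1 h2 => by
    rw [hI]; exact ⟨lt_of_lt_of_le hmI.1 (by exact_mod_cast h1), h2⟩
  have hL : ∀ x : ℝ, x ≤ xbar → ia < (x : EReal) → x ∈ I := fun x h1 h2 => by
    rw [hI]; exact ⟨h2, lt_of_le_of_lt (by exact_mod_cast h1) hmI.2⟩
  -- right half
  have hSR : I ∩ Ioi xbar = {x : ℝ | xbar < x ∧ (x : EReal) < ib} := by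
    ext x
    constructor
    · rintro ⟨h1, h2⟩; rw [hI] at h1; exact ⟨h2, h1.2⟩
    · rintro ⟨h1, h2⟩; exact ⟨hR x h1.le h2, h1⟩
  have hright : 0 ≤ ∫ x in I ∩ Ioi xbar, D x := by
    have hms : MeasurableSet (I ∩ Ioi xbar) := hIm.inter measurableSet_Ioi
    have hcg : EqOn D (fun x => p ^ p * (((1 - F x) / f x) ^ p * |deriv φ x| ^ p * f x)
        - |φ x| ^ p * f x) (I ∩ Ioi xbar) := by
      intro x hx
      simp only [hDdef, hK, if_neg (not_le.2 (show xbar < x from hx.2))]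
    rw [setIntegral_congr_fun hms hcg, hSR]
    refine aux_half xbar ib hmI.2 f (fun x => 1 - F x) φ p hp (fun x h1 h2 => hfpos x (hR x h1 h2))
      (fun x _ _ => sub_nonneg.2 (hF1 x)) (fun x h1 h2 => (hFd x (hR x h1 h2)).const_sub 1)
      (fun x h1 h2 => hφd x (hR x h1 h2)) hφ0 ?_
    rw [← hSR]
    exact (hDint.mono_set inter_subset_left).congr_fun hcg hms
  -- left half
  have hneg : ∀ x : ℝ, ((x : EReal) < -ia) ↔ ia < ((-x : ℝ) : EReal) := fun x => by
    rw [EReal.coe_neg, EReal.lt_neg_comm]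
  have hSL : (fun x : ℝ => -x) ⁻¹' (I ∩ Iio xbar) = {x : ℝ | -xbar < x ∧ (x : EReal) < -ia} := by
    ext x
    simp only [mem_preimage, mem_inter_iff, mem_Iio, mem_ofPred_eq, hneg]
    constructor
    · rintro ⟨h1, h2⟩; rw [hI] at h1; exact ⟨by linarith, h1.1⟩
    · rintro ⟨h1, h2⟩; exact ⟨hL _ (by linarith) h2, by linarith⟩
  have hleft : 0 ≤ ∫ x in I ∩ Iio xbar, D x := by
    have hms : MeasurableSet (I ∩ Iio xbar) := hIm.inter measurableSet_Iio
    have hmp : MeasurePreserving (fun x : ℝ => -x) volume volume := Measure.measurePreserving_neg _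
    have hme : MeasurableEmbedding (fun x : ℝ => -x) := (MeasurableEquiv.neg ℝ).measurableEmbedding
    rw [← hmp.setIntegral_preimage_emb hme]
    have hms' : MeasurableSet ((fun x : ℝ => -x) ⁻¹' (I ∩ Iio xbar)) := measurable_neg hms
    have hcg : EqOn (fun x => D (-x)) (fun x => p ^ p * ((F (-x) / f (-x)) ^ p *
        |deriv (fun y => φ (-y)) x| ^ p * f (-x)) - |φ (-x)| ^ p * f (-x))
        ((fun x : ℝ => -x) ⁻¹' (I ∩ Iio xbar)) := by
      intro x hx
      have : -x ≤ xbar := (show -x < xbar from hx.2).le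
      simp only [hDdef, hK, if_pos this, deriv_comp_neg, abs_neg]
    have hint : IntegrableOn (fun x => D (-x)) ((fun x : ℝ => -x) ⁻¹' (I ∩ Iio xbar)) :=
      (hmp.integrableOn_comp_preimage hme).2 (hDint.mono_set inter_subset_left)
    have hint' := hint.congr_fun hcg hms'
    rw [setIntegral_congr_fun hms' hcg, hSL]
    rw [hSL] at hint'
    have hLn : ∀ x : ℝ, -xbar ≤ x → (x : EReal) < -ia → -x ∈ I := fun x h1 h2 =>
      hL _ (by linarith) ((hneg x).1 h2)
    refine aux_half (-xbar) (-ia) ((hneg _).2 (by simpa using hmI.1)) (fun x => f (-x))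
      (fun x => F (-x)) (fun x => φ (-x)) p hp
      (fun x h1 h2 => hfpos _ (hLn x h1 h2)) (fun x _ _ => hF0 _) (fun x h1 h2 => ?_)
      (fun x h1 h2 => ?_) (by simpa using hφ0) hint'
    · have := (hFd _ (hLn x h1 h2)).comp x (hasDerivAt_neg x)
      simpa [Function.comp_def] using this
    · have := (hφd _ (hLn x h1 h2)).comp x (hasDerivAt_neg x)
      exact this.differentiableAt.hasDerivAt
  have hsplit : ∫ x in I, D x = (∫ x in I ∩ Iio xbar, D x) + ∫ x in I ∩ Ioi xbar, D x := by
    have h1 : ∫ x in I ∩ Iio xbar, D x = ∫ x in I ∩ Iic xbar, D x :=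
      setIntegral_congr_set ((Filter.EventuallyEq.refl _ _).inter Iio_ae_eq_Iic)
    rw [h1, ← integral_inter_add_sdiff (s := I) (t := Iic xbar) measurableSet_Iic hDint]
    congr 3
    ext x; simp
  have hfin : ∫ x in I, D x = p ^ p * (∫ x in I, K x ^ p * |deriv φ x| ^ p * f x)
      - ∫ x in I, |φ x| ^ p * f x := by
    rw [hDdef, integral_sub (hrhs.const_mul _) hlhs, integral_const_mul]
  linarith
end

section
/- Let X be a random variable with an absolutely continuous density f(x) > 0 on an interval I = (i₋, i₊) ⊆ ℝ, distribution function F, median x̄, and weight K(x) = F(x)/f(x) for x ≤ x̄, K(x) = (1−F(x))/f(x) for x ≥ x̄. Then for every smooth function φ on I with φ(x̄) = 0 and E[|φ(X)|] finite, E[|φ(X)|] ≤ E[K(X) |φ'(X)|]. -/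
open MeasureTheory Set

/-- **Wirtinger-type inequality with weight, case `p = 1`** (inequality (4.8)).
Let `X` have an absolutely continuous density `f > 0` on the open interval
`I = (ia, ib) ⊆ ℝ`, with distribution function `F`, median `xbar`
(`F(xbar) = 1/2`), and weight `K(x) = F(x)/f(x)` for `x ≤ xbar`,
`K(x) = (1−F(x))/f(x)` for `x ≥ xbar`. Then for every smooth `φ` on `I` with
`φ(xbar) = 0` and `E[|φ(X)|]` finite,
`E[|φ(X)|] ≤ E[K(X) |φ'(X)|]` (whenever the right-hand side is finite). -/
theorem wirtinger_with_weight_p_one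
    (ia ib : EReal) (hii : ia < ib)
    (I : Set ℝ) (hI : I = {x : ℝ | ia < (x : EReal) ∧ (x : EReal) < ib})
    (f : ℝ → ℝ) (hfcont : ContinuousOn f I) (hfpos : ∀ x ∈ I, 0 < f x)
    (hfprob : ∫ x in I, f x = 1)
    (F : ℝ → ℝ) (hF : ∀ x, F x = ∫ y in I ∩ Iio x, f y)
    (xbar : ℝ) (hxbar : xbar ∈ I) (hmedian : F xbar = 1 / 2)
    (K : ℝ → ℝ) (hK : ∀ x, K x = if x ≤ xbar then F x / f x else (1 - F x) / f x)
    (φ : ℝ → ℝ) (hφ : ContDiffOn ℝ (⊤ : ℕ∞) φ I) (hφ0 : φ xbar = 0)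
    (hlhs : IntegrableOn (fun x => |φ x| * f x) I)
    (hrhs : IntegrableOn (fun x => K x * |deriv φ x| * f x) I) :
    (∫ x in I, |φ x| * f x) ≤ ∫ x in I, K x * |deriv φ x| * f x := by
  have hIo : IsOpen I := by
    rw [hI]
    exact (isOpen_lt continuous_const continuous_coe_real_ereal).inter
      (isOpen_lt continuous_coe_real_ereal continuous_const)
  have hIm : MeasurableSet I := hIo.measurableSet
  have hIc : OrdConnected I := by
    rw [hI]
    refine ⟨fun x hx y hy z hz => ⟨hx.1.trans_le ?_, lt_of_le_of_lt ?_ hy.2⟩⟩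
    · exact_mod_cast hz.1
    · exact_mod_cast hz.2
  have hfi : IntegrableOn f I := by
    by_contra h
    rw [integral_undef h] at hfprob
    norm_num at hfprob
  have hf0 : 0 ≤ᵐ[volume.restrict I] f := by
    filter_upwards [ae_restrict_mem hIm] with x hx using (hfpos x hx).le
  have hF0 : ∀ x, 0 ≤ F x := by
    intro x
    rw [hF]
    exact setIntegral_nonneg (hIm.inter measurableSet_Iio) (fun y hy => (hfpos y hy.1).le)
  have hFc : ∀ x, 1 - F x = ∫ y in I ∩ Ici x, f y := by
    intro x
    have h := integral_inter_add_sdiff (μ := volume) (s := I) (t := Iio x) measurableSet_Iio hfi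
    have e : I \ Iio x = I ∩ Ici x := by
      ext y; simp
    rw [hfprob, ← hF, e] at h
    linarith
  have hF1 : ∀ x, 0 ≤ 1 - F x := by
    intro x
    rw [hFc]
    exact setIntegral_nonneg (hIm.inter measurableSet_Ici) (fun y hy => (hfpos y hy.1).le)
  have hKf : ∀ t ∈ I, K t * f t = ∫ x in I ∩ {x | t ∈ uIoc xbar x}, f x := by
    intro t ht
    have hne := (hfpos t ht).ne'
    rw [hK]
    split_ifs with h
    · rw [div_mul_cancel₀ _ hne, hF]
      congr 3
      ext x
      simp only [mem_Iio, mem_setOf_eq, mem_uIoc]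
      grind
    · rw [div_mul_cancel₀ _ hne, hFc]
      congr 3
      ext x
      simp only [mem_Ici, mem_setOf_eq, mem_uIoc]
      grind
  have hAm : MeasurableSet {p : ℝ × ℝ | p.2 ∈ uIoc xbar p.1} := by
    have : {p : ℝ × ℝ | p.2 ∈ uIoc xbar p.1} =
        {p | xbar < p.2} ∩ {p | p.2 ≤ p.1} ∪ {p | p.1 < p.2} ∩ {p | p.2 ≤ xbar} := by
      ext p; simp [mem_uIoc]
    rw [this]
    exact ((measurableSet_lt measurable_const measurable_snd).inter
      (measurableSet_le measurable_snd measurable_fst)).union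
      ((measurableSet_lt measurable_fst measurable_snd).inter
      (measurableSet_le measurable_snd measurable_const))
  have hAx : ∀ t, MeasurableSet {x | t ∈ uIoc xbar x} := fun t =>
    hAm.preimage (measurable_id.prodMk measurable_const)
  have hKn : ∀ t ∈ I, 0 ≤ K t * f t := by
    intro t ht
    rw [hKf t ht]
    exact setIntegral_nonneg (hIm.inter (hAx t)) (fun y hy => (hfpos y hy.1).le)
  have hKl : ∀ t ∈ I, ENNReal.ofReal (K t * f t) =
      ∫⁻ x in I, ({x | t ∈ uIoc xbar x} : Set ℝ).indicator (fun x => ENNReal.ofReal (f x)) x := by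
    intro t ht
    rw [hKf t ht, lintegral_indicator (hAx t), Measure.restrict_restrict (hAx t), inter_comm I,
      ofReal_integral_eq_lintegral_ofReal (hfi.mono_set inter_subset_right)]
    exact ae_restrict_of_ae_restrict_of_subset inter_subset_right hf0
  have hφd : ∀ x ∈ I, HasDerivAt φ (deriv φ x) x := fun x hx =>
    ((hφ.differentiableOn (by simp)).differentiableAt (hIo.mem_nhds hx)).hasDerivAt
  have hφc : ContinuousOn (deriv φ) I := hφ.continuousOn_deriv_of_isOpen hIo (by simp)
  have hpt : ∀ x ∈ I, ENNReal.ofReal |φ x| ≤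
      ∫⁻ t in I, (uIoc xbar x).indicator (fun t => ENNReal.ofReal |deriv φ t|) t := by
    intro x hx
    have hsub : uIcc xbar x ⊆ I := hIc.uIcc_subset hxbar hx
    have h1 : ∫ t in xbar..x, deriv φ t = φ x := by
      rw [intervalIntegral.integral_eq_sub_of_hasDerivAt (fun t ht => hφd t (hsub ht))
        (hφc.mono hsub).intervalIntegrable, hφ0, sub_zero]
    have h2 : |φ x| = ‖∫ t in uIoc xbar x, deriv φ t‖ := by
      rw [← h1, ← Real.norm_eq_abs, intervalIntegral.norm_intervalIntegral_eq]
    rw [lintegral_indicator measurableSet_uIoc, Measure.restrict_restrict measurableSet_uIoc,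
      inter_eq_left.2 (uIoc_subset_uIcc.trans hsub), h2, ofReal_norm_eq_enorm]
    refine (enorm_integral_le_lintegral_enorm _).trans (le_of_eq ?_)
    simp_rw [← Real.norm_eq_abs, ofReal_norm_eq_enorm]
  have hR0 : 0 ≤ᵐ[volume.restrict I] fun x => K x * |deriv φ x| * f x := by
    filter_upwards [ae_restrict_mem hIm] with x hx
    have := mul_nonneg (hKn x hx) (abs_nonneg (deriv φ x))
    show 0 ≤ _
    linarith
  have hL0 : 0 ≤ᵐ[volume.restrict I] fun x => |φ x| * f x := by
    filter_upwards [ae_restrict_mem hIm] with x hx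
    exact mul_nonneg (abs_nonneg _) (hfpos x hx).le
  rw [← ENNReal.ofReal_le_ofReal_iff (integral_nonneg_of_ae hR0),
    ofReal_integral_eq_lintegral_ofReal hlhs hL0, ofReal_integral_eq_lintegral_ofReal hrhs hR0]
  have hwm : AEMeasurable (fun x => ENNReal.ofReal (f x)) (volume.restrict I) :=
    hfi.aestronglyMeasurable.aemeasurable.ennreal_ofReal
  have hgm : Measurable (fun x => ENNReal.ofReal |deriv φ x|) := by
    simp_rw [← Real.norm_eq_abs]
    exact (measurable_deriv φ).norm.ennreal_ofReal
  calc ∫⁻ x in I, ENNReal.ofReal (|φ x| * f x)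
      ≤ ∫⁻ x in I, ∫⁻ t in I, ({p : ℝ × ℝ | p.2 ∈ uIoc xbar p.1}).indicator
          (fun p => ENNReal.ofReal (f p.1) * ENNReal.ofReal |deriv φ p.2|) (x, t) := by
        refine setLIntegral_mono' hIm fun x hx => ?_
        rw [ENNReal.ofReal_mul (abs_nonneg _), mul_comm]
        refine (mul_le_mul_right (hpt x hx) _).trans (le_of_eq ?_)
        rw [← lintegral_const_mul _ (hgm.indicator measurableSet_uIoc)]
        refine lintegral_congr fun t => ?_
        by_cases h : t ∈ uIoc xbar x <;> simp [indicator, h]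
    _ = ∫⁻ t in I, ∫⁻ x in I, ({p : ℝ × ℝ | p.2 ∈ uIoc xbar p.1}).indicator
          (fun p => ENNReal.ofReal (f p.1) * ENNReal.ofReal |deriv φ p.2|) (x, t) := by
        refine lintegral_lintegral_swap ?_
        refine AEMeasurable.indicator ?_ hAm
        exact (hwm.comp_quasiMeasurePreserving Measure.quasiMeasurePreserving_fst).mul
          (hgm.comp measurable_snd).aemeasurable
    _ = ∫⁻ t in I, ENNReal.ofReal (K t * |deriv φ t| * f t) := by
        refine setLIntegral_congr_fun hIm fun t ht => ?_
        have e : K t * |deriv φ t| * f t = |deriv φ t| * (K t * f t) := by ring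
        simp only [e]
        rw [ENNReal.ofReal_mul (abs_nonneg _), hKl t ht,
          ← lintegral_const_mul'' _ (hwm.indicator (hAx t))]
        refine lintegral_congr fun x => ?_
        by_cases h : t ∈ uIoc xbar x <;> simp [indicator, h, mul_comm]
end

section
/- Let β > 1/2 and let X be a random variable distributed on ℝ with the Cauchy-type density f_β(x) = C_β/(1+x²)^β. Then for every 1 ≤ p < ∞ and every smooth function φ on ℝ with E[|φ(X)|^p] finite, E[|φ(X) − E[φ(X)]|^p] ≤ 2^β (2p/(2β−1))^p E[(1+|X|)^p |φ'(X)|^p]. -/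
open MeasureTheory Set

lemma aux_young_s12 (p s t : ℝ) (hp : 1 ≤ p) (hs : 0 ≤ s) (ht : 0 ≤ t) :
    p * (s ^ (p - 1) * t) ≤ (p - 1) * s ^ p + t ^ p := by
  have hp0 : 0 < p := by linarith
  have h := Real.geom_mean_le_arith_mean2_weighted (w₁ := (p-1)/p) (w₂ := 1/p)
    (p₁ := s^p) (p₂ := t^p) (div_nonneg (by linarith) hp0.le) (by positivity)
    (by positivity) (by positivity) (by field_simp; ring)
  rw [← Real.rpow_mul hs, ← Real.rpow_mul ht, mul_div_cancel₀ _ hp0.ne',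
    mul_div_cancel₀ _ hp0.ne', Real.rpow_one] at h
  have h2 := mul_le_mul_of_nonneg_left h hp0.le
  calc _ ≤ _ := h2
    _ = _ := by field_simp

lemma aux_hardy (β p R : ℝ) (hβ : 1 / 2 < β) (hp : 1 ≤ p) (hR : 0 ≤ R) (g : ℝ → ℝ)
    (hg : ContDiff ℝ 1 g) :
    ∫ x in (0:ℝ)..R, |g x - g 0| ^ p * (1 + x) ^ (-(2 * β)) ≤
      (p / (2 * β - 1)) ^ p *
        ∫ x in (0:ℝ)..R, (1 + x) ^ p * |deriv g x| ^ p * (1 + x) ^ (-(2 * β)) := by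
  have hp0 : 0 < p := by linarith
  have ha : 0 < 2 * β - 1 := by linarith
  set a := 2 * β - 1 with hadef
  have hd : Continuous (deriv g) := hg.continuous_deriv le_rfl
  have hda : Continuous (fun x => |deriv g x|) := hd.abs
  have hgd : ∀ x, HasDerivAt g (deriv g x) x := fun x =>
    (hg.differentiable one_ne_zero x).hasDerivAt
  let F : ℝ → ℝ := fun x => ∫ t in (0:ℝ)..x, |deriv g t|
  have hF : ∀ x, HasDerivAt F (|deriv g x|) x := fun x =>
    intervalIntegral.integral_hasDerivAt_right (hda.intervalIntegrable _ _)
      (hda.stronglyMeasurableAtFilter _ _) hda.continuousAt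
  have hFc : Continuous F := continuous_iff_continuousAt.2 fun x => (hF x).continuousAt
  have hFg : ∀ x, 0 ≤ x → |g x - g 0| ≤ F x := by
    intro x hx
    have : ∫ t in (0:ℝ)..x, deriv g t = g x - g 0 :=
      intervalIntegral.integral_eq_sub_of_hasDerivAt (fun y _ => hgd y)
        (hd.intervalIntegrable _ _)
    rw [← this]
    exact intervalIntegral.abs_integral_le_integral_abs hx
  have hF0 : ∀ x, 0 ≤ x → 0 ≤ F x := fun x hx => (abs_nonneg _).trans (hFg x hx)
  have huI : uIcc 0 R = Icc 0 R := uIcc_of_le hR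
  have hw : ∀ r : ℝ, ContinuousOn (fun x : ℝ => (1 + x) ^ r) (Icc 0 R) := fun r =>
    ContinuousOn.rpow_const (by fun_prop) (fun x hx => Or.inl (by linarith [hx.1]))
  have cF : ∀ q : ℝ, 0 ≤ q → Continuous (fun x => F x ^ q) := fun q hq =>
    hFc.rpow_const (fun _ => Or.inr hq)
  have cg : Continuous (fun x => |g x - g 0| ^ p) :=
    (hg.continuous.sub continuous_const).abs.rpow_const (fun _ => Or.inr hp0.le)
  have cd : Continuous (fun x => |deriv g x| ^ p) :=
    hda.rpow_const (fun _ => Or.inr hp0.le)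
  have i1 : IntervalIntegrable (fun x => |g x - g 0| ^ p * (1 + x) ^ (-(2 * β))) volume 0 R :=
    ContinuousOn.intervalIntegrable (by rw [huI]; exact cg.continuousOn.mul (hw _))
  have i2 : IntervalIntegrable (fun x => F x ^ p * (1 + x) ^ (-(2 * β))) volume 0 R :=
    ContinuousOn.intervalIntegrable (by rw [huI]; exact (cF p hp0.le).continuousOn.mul (hw _))
  have i3 : IntervalIntegrable
      (fun x => (1 + x) ^ p * |deriv g x| ^ p * (1 + x) ^ (-(2 * β))) volume 0 R :=
    ContinuousOn.intervalIntegrable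
      (by rw [huI]; exact ((hw p).mul cd.continuousOn).mul (hw _))
  have i4 : IntervalIntegrable
      (fun x => (-a * (1 + x) ^ (-a - 1)) * F x ^ p +
        (1 + x) ^ (-a) * (|deriv g x| * p * F x ^ (p - 1))) volume 0 R :=
    ContinuousOn.intervalIntegrable
      (by
        rw [huI]
        exact ((continuousOn_const.mul (hw _)).mul (cF p hp0.le).continuousOn).add
          ((hw _).mul ((hda.mul continuous_const).mul (cF (p-1) (by linarith))).continuousOn))
  have key : ∫ x in (0:ℝ)..R, ((-a * (1 + x) ^ (-a - 1)) * F x ^ p +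
        (1 + x) ^ (-a) * (|deriv g x| * p * F x ^ (p - 1))) =
      (1 + R) ^ (-a) * F R ^ p - (1 + 0) ^ (-a) * F 0 ^ p := by
    refine intervalIntegral.integral_eq_sub_of_hasDerivAt
      (f := fun x => (1 + x) ^ (-a) * F x ^ p) ?_ i4
    intro x hx
    rw [huI] at hx
    have h1 : HasDerivAt (fun x : ℝ => (1 + x) ^ (-a)) (-a * (1 + x) ^ (-a - 1)) x := by
      have := ((hasDerivAt_id x).const_add 1).rpow_const (p := -a)
        (Or.inl (by simp only [id]; linarith [hx.1]))
      simpa using this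
    exact h1.mul ((hF x).rpow_const (Or.inr hp))
  have hF00 : F 0 = 0 := by simp [F]
  rw [hF00, Real.zero_rpow hp0.ne', mul_zero, sub_zero] at key
  have hpos : 0 ≤ (1 + R) ^ (-a) * F R ^ p :=
    mul_nonneg (Real.rpow_nonneg (by linarith) _) (Real.rpow_nonneg (hF0 R hR) _)
  rw [← key] at hpos
  have le1 : ∫ x in (0:ℝ)..R, ((-a * (1 + x) ^ (-a - 1)) * F x ^ p +
        (1 + x) ^ (-a) * (|deriv g x| * p * F x ^ (p - 1))) ≤
      ∫ x in (0:ℝ)..R, (a / p) * ((p / a) ^ p *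
          ((1 + x) ^ p * |deriv g x| ^ p * (1 + x) ^ (-(2 * β)))
        - F x ^ p * (1 + x) ^ (-(2 * β))) := by
    refine intervalIntegral.integral_mono_on hR i4
      (((i3.const_mul _).sub i2).const_mul _) ?_
    intro x hx
    have hx1 : 0 < 1 + x := by linarith [hx.1]
    have hy := aux_young_s12 p (F x) ((p / a) * ((1 + x) * |deriv g x|)) hp (hF0 x hx.1)
      (by positivity)
    rw [Real.mul_rpow (by positivity) (by positivity),
      Real.mul_rpow hx1.le (abs_nonneg _)] at hy
    have e1 : -a - 1 = -(2 * β) := by rw [hadef]; ring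
    have e2 : (1 + x) ^ (-a) = (1 + x) ^ (-(2 * β)) * (1 + x) := by
      rw [← Real.rpow_add_one hx1.ne']; congr 1; rw [hadef]; ring
    rw [e1, e2]
    have hwp : 0 ≤ (1 + x) ^ (-(2 * β)) := by positivity
    have h3 := mul_le_mul_of_nonneg_left hy (mul_nonneg (div_nonneg ha.le hp0.le) hwp)
    generalize (1 + x) ^ (-(2 * β)) = w at *
    have e3 : a / p * w * (p * (F x ^ (p - 1) * (p / a * ((1 + x) * |deriv g x|)))) =
      w * (1 + x) * (|deriv g x| * p * F x ^ (p - 1)) := by field_simp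
    rw [e3] at h3
    have e4 : a / p * w * ((p - 1) * F x ^ p + (p / a) ^ p * ((1 + x) ^ p * |deriv g x| ^ p))
      = a * w * F x ^ p + a / p * ((p / a) ^ p *
          ((1 + x) ^ p * |deriv g x| ^ p * w) - F x ^ p * w) := by
      field_simp; ring
    rw [e4] at h3
    linarith
  have le2 := hpos.trans le1
  rw [intervalIntegral.integral_const_mul, intervalIntegral.integral_sub (i3.const_mul _) i2,
    intervalIntegral.integral_const_mul] at le2
  have le3 := nonneg_of_mul_nonneg_right le2 (div_pos ha hp0)
  have le4 : ∫ x in (0:ℝ)..R, |g x - g 0| ^ p * (1 + x) ^ (-(2 * β)) ≤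
      ∫ x in (0:ℝ)..R, F x ^ p * (1 + x) ^ (-(2 * β)) := by
    refine intervalIntegral.integral_mono_on hR i1 i2 ?_
    intro x hx
    have hx1 : 0 < 1 + x := by linarith [hx.1]
    exact mul_le_mul_of_nonneg_right
      (Real.rpow_le_rpow (abs_nonneg _) (hFg x hx.1) hp0.le) (by positivity)
  linarith

lemma aux_weight (β x : ℝ) (hβ : 1 / 2 < β) (hx : 0 ≤ x) :
    (1 + x) ^ (-(2 * β)) ≤ 1 / (1 + x ^ 2) ^ β ∧
    1 / (1 + x ^ 2) ^ β ≤ 2 ^ β * (1 + x) ^ (-(2 * β)) := by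
  have hx1 : 0 < 1 + x := by linarith
  have hb : 0 ≤ β := by linarith
  have e : (1 + x) ^ (-(2 * β)) = 1 / ((1 + x) ^ 2) ^ β := by
    rw [Real.rpow_neg hx1.le, Real.rpow_mul hx1.le, one_div]; norm_num
  rw [e]
  constructor
  · apply one_div_le_one_div_of_le (by positivity)
    exact Real.rpow_le_rpow (by positivity) (by nlinarith) hb
  · rw [mul_one_div, div_le_div_iff₀ (by positivity) (by positivity), one_mul,
      ← Real.mul_rpow (by norm_num) (by positivity)]
    exact Real.rpow_le_rpow (by positivity) (by nlinarith [sq_nonneg (x - 1)]) hb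

lemma aux_half_s12 (β p R C : ℝ) (hβ : 1 / 2 < β) (hC : 0 < C) (hp : 1 ≤ p) (hR : 0 ≤ R) (g : ℝ → ℝ)
    (hg : ContDiff ℝ 1 g) :
    ∫ x in (0:ℝ)..R, |g x - g 0| ^ p * (C / (1 + x ^ 2) ^ β) ≤
      2 ^ β * (p / (2 * β - 1)) ^ p *
        ∫ x in (0:ℝ)..R, (1 + |x|) ^ p * |deriv g x| ^ p * (C / (1 + x ^ 2) ^ β) := by
  have hp0 : 0 < p := by linarith
  have huI : uIcc 0 R = Icc 0 R := uIcc_of_le hR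
  have hw : ∀ r : ℝ, ContinuousOn (fun x : ℝ => (1 + x) ^ r) (Icc 0 R) := fun r =>
    ContinuousOn.rpow_const (by fun_prop) (fun x hx => Or.inl (by linarith [hx.1]))
  have hd : Continuous (deriv g) := hg.continuous_deriv le_rfl
  have cg : Continuous (fun x => |g x - g 0| ^ p) :=
    (hg.continuous.sub continuous_const).abs.rpow_const (fun _ => Or.inr hp0.le)
  have cd : Continuous (fun x => |deriv g x| ^ p) :=
    hd.abs.rpow_const (fun _ => Or.inr hp0.le)
  have cr : Continuous (fun x : ℝ => C / (1 + x ^ 2) ^ β) := by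
    refine continuous_const.div (Continuous.rpow_const (by fun_prop) ?_) ?_
    · intro x; left; positivity
    · intro x; positivity
  have c1 : Continuous (fun x : ℝ => (1 + |x|) ^ p) :=
    Continuous.rpow_const (by fun_prop) (fun _ => Or.inr hp0.le)
  have i1 : IntervalIntegrable (fun x => |g x - g 0| ^ p * (1 + x) ^ (-(2 * β))) volume 0 R :=
    ContinuousOn.intervalIntegrable (by rw [huI]; exact cg.continuousOn.mul (hw _))
  have i3 : IntervalIntegrable
      (fun x => (1 + x) ^ p * |deriv g x| ^ p * (1 + x) ^ (-(2 * β))) volume 0 R :=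
    ContinuousOn.intervalIntegrable
      (by rw [huI]; exact ((hw p).mul cd.continuousOn).mul (hw _))
  have h := aux_hardy β p R hβ hp hR g hg
  have h1 : ∫ x in (0:ℝ)..R, |g x - g 0| ^ p * (C / (1 + x ^ 2) ^ β) ≤
      ∫ x in (0:ℝ)..R, (C * 2 ^ β) * (|g x - g 0| ^ p * (1 + x) ^ (-(2 * β))) := by
    refine intervalIntegral.integral_mono_on hR ((cg.mul cr).intervalIntegrable _ _)
      (i1.const_mul _) ?_
    intro x hx
    have := mul_le_mul_of_nonneg_left (aux_weight β x hβ hx.1).2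
      (by positivity : 0 ≤ C * |g x - g 0| ^ p)
    calc _ = C * |g x - g 0| ^ p * (1 / (1 + x ^ 2) ^ β) := by ring
      _ ≤ _ := this
      _ = _ := by ring
  have h2 : ∫ x in (0:ℝ)..R, C * ((1 + x) ^ p * |deriv g x| ^ p * (1 + x) ^ (-(2 * β))) ≤
      ∫ x in (0:ℝ)..R, (1 + |x|) ^ p * |deriv g x| ^ p * (C / (1 + x ^ 2) ^ β) := by
    refine intervalIntegral.integral_mono_on hR (i3.const_mul _)
      (((c1.mul cd).mul cr).intervalIntegrable _ _) ?_
    intro x hx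
    have hx1 : 0 < 1 + x := by linarith [hx.1]
    rw [abs_of_nonneg hx.1]
    have := mul_le_mul_of_nonneg_left (aux_weight β x hβ hx.1).1
      (by positivity : 0 ≤ C * ((1 + x) ^ p * |deriv g x| ^ p))
    calc _ = C * ((1 + x) ^ p * |deriv g x| ^ p) * (1 + x) ^ (-(2 * β)) := by ring
      _ ≤ _ := this
      _ = _ := by ring
  rw [intervalIntegral.integral_const_mul] at h1 h2
  have ha : 0 < 2 * β - 1 := by linarith
  have hk : 0 ≤ (2:ℝ) ^ β * (p / (2 * β - 1)) ^ p := by positivity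
  calc _ ≤ _ := h1
    _ ≤ _ := mul_le_mul_of_nonneg_left h (by positivity)
    _ = (2:ℝ) ^ β * (p / (2 * β - 1)) ^ p * (C * ∫ x in (0:ℝ)..R,
          (1 + x) ^ p * |deriv g x| ^ p * (1 + x) ^ (-(2 * β))) := by ring
    _ ≤ _ := mul_le_mul_of_nonneg_left h2 hk

lemma aux_sum (β p R C : ℝ) (hβ : 1 / 2 < β) (hC : 0 < C) (hp : 1 ≤ p) (hR : 0 ≤ R) (g : ℝ → ℝ)
    (hg : ContDiff ℝ 1 g) :
    ∫ x in (-R)..R, |g x - g 0| ^ p * (C / (1 + x ^ 2) ^ β) ≤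
      2 ^ β * (p / (2 * β - 1)) ^ p *
        ∫ x in (-R)..R, (1 + |x|) ^ p * |deriv g x| ^ p * (C / (1 + x ^ 2) ^ β) := by
  have hp0 : 0 < p := by linarith
  have hd : Continuous (deriv g) := hg.continuous_deriv le_rfl
  have cg : Continuous (fun x => |g x - g 0| ^ p) :=
    (hg.continuous.sub continuous_const).abs.rpow_const (fun _ => Or.inr hp0.le)
  have cd : Continuous (fun x => |deriv g x| ^ p) :=
    hd.abs.rpow_const (fun _ => Or.inr hp0.le)
  have cr : Continuous (fun x : ℝ => C / (1 + x ^ 2) ^ β) := by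
    refine continuous_const.div (Continuous.rpow_const (by fun_prop) ?_) ?_
    · intro x; left; positivity
    · intro x; positivity
  have c1 : Continuous (fun x : ℝ => (1 + |x|) ^ p) :=
    Continuous.rpow_const (by fun_prop) (fun _ => Or.inr hp0.le)
  have h1 := aux_half_s12 β p R C hβ hC hp hR g hg
  have h2 := aux_half_s12 β p R C hβ hC hp hR (fun x => g (-x)) (hg.comp contDiff_neg)
  have s1 := intervalIntegral.integral_comp_neg (a := 0) (b := R)
    (fun x => |g x - g 0| ^ p * (C / (1 + x ^ 2) ^ β))
  have s2 := intervalIntegral.integral_comp_neg (a := 0) (b := R)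
    (fun x => (1 + |x|) ^ p * |deriv g x| ^ p * (C / (1 + x ^ 2) ^ β))
  simp only [deriv_comp_neg, abs_neg, neg_zero, neg_sq] at h2 s1 s2
  rw [s1, s2] at h2
  have j1 : Continuous (fun x => |g x - g 0| ^ p * (C / (1 + x ^ 2) ^ β)) := cg.mul cr
  have j2 : Continuous (fun x => (1 + |x|) ^ p * |deriv g x| ^ p * (C / (1 + x ^ 2) ^ β)) :=
    (c1.mul cd).mul cr
  rw [← intervalIntegral.integral_add_adjacent_intervals
      (j1.intervalIntegrable (-R) 0) (j1.intervalIntegrable 0 R),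
    ← intervalIntegral.integral_add_adjacent_intervals
      (j2.intervalIntegrable (-R) 0) (j2.intervalIntegrable 0 R), mul_add]
  exact add_le_add h2 h1

lemma aux_conv (p a b : ℝ) (hp : 1 ≤ p) :
    |a - b| ^ p ≤ 2 ^ (p - 1) * (|a| ^ p + |b| ^ p) := by
  have h : (|a| + |b|) ^ p ≤ 2 ^ (p - 1) * (|a| ^ p + |b| ^ p) := by
    have h0 := NNReal.rpow_add_le_mul_rpow_add_rpow (Real.nnabs a) (Real.nnabs b) hp
    have h1 := NNReal.coe_le_coe.2 h0
    push_cast at h1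
    simpa using h1
  have h2 : |a - b| ≤ |a| + |b| := by
    simpa [Real.norm_eq_abs] using norm_sub_le a b
  exact (Real.rpow_le_rpow (abs_nonneg _) h2 (by linarith)).trans h

theorem wirtinger_cauchy_type
    (β : ℝ) (hβ : 1 / 2 < β)
    (C : ℝ) (hC : 0 < C)
    (hnorm : ∫ x : ℝ, C / (1 + x ^ 2) ^ β = 1)
    (p : ℝ) (hp : 1 ≤ p)
    (φ : ℝ → ℝ) (hφ : ContDiff ℝ (⊤ : ℕ∞) φ)
    (hlhs : Integrable (fun x => |φ x| ^ p * (C / (1 + x ^ 2) ^ β)))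
    (hrhs : Integrable (fun x =>
      (1 + |x|) ^ p * |deriv φ x| ^ p * (C / (1 + x ^ 2) ^ β))) :
    (∫ x : ℝ, |φ x - ∫ y : ℝ, φ y * (C / (1 + y ^ 2) ^ β)| ^ p * (C / (1 + x ^ 2) ^ β))
      ≤ (2 : ℝ) ^ β * (2 * p / (2 * β - 1)) ^ p *
          ∫ x : ℝ, (1 + |x|) ^ p * |deriv φ x| ^ p * (C / (1 + x ^ 2) ^ β) := by

  have hp0 : 0 < p := by linarith
  have ha : 0 < 2 * β - 1 := by linarith
  have hg : ContDiff ℝ 1 φ := hφ.of_le (by exact_mod_cast le_top)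
  have cr : Continuous (fun x : ℝ => C / (1 + x ^ 2) ^ β) := by
    refine continuous_const.div (Continuous.rpow_const (by fun_prop) ?_) ?_
    · intro x; left; positivity
    · intro x; positivity
  have hr0 : ∀ x : ℝ, 0 ≤ C / (1 + x ^ 2) ^ β := fun x => by positivity
  have ir : Integrable (fun x : ℝ => C / (1 + x ^ 2) ^ β) := by
    by_contra h
    rw [integral_undef h] at hnorm
    exact zero_ne_one hnorm
  have habs : ∀ c, Continuous (fun x => |φ x - c| ^ p) := fun c =>
    (hg.continuous.sub continuous_const).abs.rpow_const (fun _ => Or.inr hp0.le)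
  have ic : ∀ c : ℝ, Integrable (fun x => |φ x - c| ^ p * (C / (1 + x ^ 2) ^ β)) := by
    intro c
    refine Integrable.mono' ((hlhs.add (ir.const_mul (|c| ^ p))).const_mul (2 ^ (p - 1)))
      ((habs c).mul cr).aestronglyMeasurable (Filter.Eventually.of_forall fun x => ?_)
    rw [Real.norm_of_nonneg (mul_nonneg (by positivity) (hr0 x))]
    have := mul_le_mul_of_nonneg_right (aux_conv p (φ x) c hp) (hr0 x)
    simp only [Pi.add_apply]
    calc _ ≤ _ := this
      _ = _ := by ring
  have i1 : Integrable (fun x => φ x * (C / (1 + x ^ 2) ^ β)) := by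
    refine Integrable.mono' (ir.add hlhs)
      (hg.continuous.mul cr).aestronglyMeasurable (Filter.Eventually.of_forall fun x => ?_)
    rw [norm_mul, Real.norm_of_nonneg (hr0 x), Real.norm_eq_abs]
    have : |φ x| ≤ 1 + |φ x| ^ p := by
      rcases le_total (|φ x|) 1 with h | h
      · have : 0 ≤ |φ x| ^ p := by positivity
        linarith
      · have := Real.rpow_le_rpow_of_exponent_le h hp
        rw [Real.rpow_one] at this
        linarith
    have := mul_le_mul_of_nonneg_right this (hr0 x)
    simp only [Pi.add_apply]
    linarith
  set m := ∫ y : ℝ, φ y * (C / (1 + y ^ 2) ^ β) with hm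
  set c := φ 0 with hc
  -- Hardy step
  have hardy : ∫ x : ℝ, |φ x - c| ^ p * (C / (1 + x ^ 2) ^ β) ≤
      2 ^ β * (p / (2 * β - 1)) ^ p *
        ∫ x : ℝ, (1 + |x|) ^ p * |deriv φ x| ^ p * (C / (1 + x ^ 2) ^ β) := by
    have t1 := intervalIntegral_tendsto_integral (ic c) Filter.tendsto_neg_atTop_atBot
      Filter.tendsto_id
    have t2 := (intervalIntegral_tendsto_integral hrhs Filter.tendsto_neg_atTop_atBot
      Filter.tendsto_id).const_mul (2 ^ β * (p / (2 * β - 1)) ^ p)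
    refine le_of_tendsto_of_tendsto t1 t2 ?_
    filter_upwards [Filter.eventually_ge_atTop 0] with R hR
    exact aux_sum β p R C hβ hC hp hR φ hg
  -- Jensen step
  have jensen : |m - c| ^ p ≤ ∫ x : ℝ, |φ x - c| ^ p * (C / (1 + x ^ 2) ^ β) := by
    have i2 : Integrable (fun x => (φ x - c) * (C / (1 + x ^ 2) ^ β)) := by
      simp only [sub_mul]
      exact i1.sub (ir.const_mul c)
    have i3 : Integrable (fun x => |φ x - c| * (C / (1 + x ^ 2) ^ β)) := by
      refine i2.abs.congr (Filter.Eventually.of_forall fun x => ?_)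
      simp only [abs_mul, abs_of_nonneg (hr0 x)]
    have e1 : m - c = ∫ x, (φ x - c) * (C / (1 + x ^ 2) ^ β) := by
      simp only [sub_mul]
      rw [integral_sub i1 (ir.const_mul c), integral_const_mul, hnorm, mul_one]
    have l1 : |m - c| ≤ ∫ x, |φ x - c| * (C / (1 + x ^ 2) ^ β) := by
      rw [e1]
      refine (abs_integral_le_integral_abs).trans (le_of_eq ?_)
      congr 1
      funext x
      simp only [abs_mul, abs_of_nonneg (hr0 x)]
    set s := |m - c| with hs
    have hs0 : 0 ≤ s := abs_nonneg _
    have l2 : ∫ x, (p * s ^ (p - 1)) * (|φ x - c| * (C / (1 + x ^ 2) ^ β)) ≤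
        ∫ x, (((p - 1) * s ^ p) * (C / (1 + x ^ 2) ^ β) +
          |φ x - c| ^ p * (C / (1 + x ^ 2) ^ β)) := by
      refine integral_mono (i3.const_mul _) ((ir.const_mul _).add (ic c)) fun x => ?_
      have := mul_le_mul_of_nonneg_right
        (aux_young_s12 p s (|φ x - c|) hp hs0 (abs_nonneg _)) (hr0 x)
      simp only
      linarith
    rw [integral_const_mul, integral_add (ir.const_mul _) (ic c), integral_const_mul, hnorm] at l2
    have l3 := mul_le_mul_of_nonneg_left l1 (by positivity : 0 ≤ p * s ^ (p - 1))
    have e2 : s ^ (p - 1) * s = s ^ p := by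
      rcases hs0.eq_or_lt with h | h
      · rw [← h, mul_zero, Real.zero_rpow hp0.ne']
      · rw [← Real.rpow_add_one h.ne']; congr 1; ring
    rw [mul_assoc, e2] at l3
    linarith
  -- conclusion
  have fin : ∫ x : ℝ, |φ x - m| ^ p * (C / (1 + x ^ 2) ^ β) ≤
      ∫ x : ℝ, 2 ^ (p - 1) * (|φ x - c| ^ p * (C / (1 + x ^ 2) ^ β) +
        |m - c| ^ p * (C / (1 + x ^ 2) ^ β)) := by
    refine integral_mono (ic m) (((ic c).add (ir.const_mul _)).const_mul _) fun x => ?_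
    have := mul_le_mul_of_nonneg_right (aux_conv p (φ x - c) (m - c) hp) (hr0 x)
    rw [sub_sub_sub_cancel_right] at this
    simp only
    linarith
  rw [integral_const_mul, integral_add (ic c) (ir.const_mul _), integral_const_mul, hnorm,
    mul_one] at fin
  have e3 : (2:ℝ) ^ p = 2 ^ (p - 1) * 2 := by
    rw [← Real.rpow_add_one two_ne_zero]; congr 1; ring
  have e4 : (2 * p / (2 * β - 1)) ^ p = 2 ^ p * (p / (2 * β - 1)) ^ p := by
    rw [mul_div_assoc, Real.mul_rpow (by norm_num) (by positivity)]
  have h2p : (0:ℝ) ≤ 2 ^ (p - 1) := by positivity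
  calc _ ≤ _ := fin
    _ ≤ 2 ^ (p - 1) * (2 * ∫ x : ℝ, |φ x - c| ^ p * (C / (1 + x ^ 2) ^ β)) :=
      mul_le_mul_of_nonneg_left (by linarith) h2p
    _ ≤ 2 ^ (p - 1) * (2 * (2 ^ β * (p / (2 * β - 1)) ^ p *
        ∫ x : ℝ, (1 + |x|) ^ p * |deriv φ x| ^ p * (C / (1 + x ^ 2) ^ β))) :=
      mul_le_mul_of_nonneg_left (by linarith) h2p
    _ = _ := by rw [e4, e3]; ring
end

section
/- Let β > 1/2 and let Y be a random variable distributed on ℝ with density g_β(x) = c_β/(1+|x|)^{2β}, c_β the normalizing constant. Then for every 1 ≤ p < ∞ and every smooth function φ on ℝ with φ(0) = 0 and E[|φ(Y)|^p] finite, E[|φ(Y)|^p] ≤ (p/(2β−1))^p E[(1+|Y|)^p |φ'(Y)|^p]. -/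
open MeasureTheory Set

lemma wsp_young (p : ℝ) (hp : 1 ≤ p) (A B : ℝ) (hA : 0 ≤ A) (hB : 0 ≤ B) :
    p * (A ^ (p - 1) * B) ≤ (p - 1) * A ^ p + B ^ p := by
  have hp0 : 0 < p := by linarith
  have h := Real.geom_mean_le_arith_mean2_weighted (w₁ := (p - 1) / p) (w₂ := 1 / p)
    (p₁ := A ^ p) (p₂ := B ^ p) (div_nonneg (by linarith) hp0.le) (by positivity)
    (by positivity) (by positivity) (by field_simp; ring)
  rw [← Real.rpow_mul hA, ← Real.rpow_mul hB, mul_div_cancel₀ _ hp0.ne',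
    mul_div_cancel₀ _ hp0.ne', Real.rpow_one] at h
  calc p * (A ^ (p - 1) * B) ≤ p * ((p - 1) / p * A ^ p + 1 / p * B ^ p) := by gcongr
    _ = _ := by field_simp

lemma wsp_fin (β : ℝ) (hβ : 1 / 2 < β) (c : ℝ) (hc : 0 < c) (p : ℝ) (hp : 1 ≤ p)
    (φ : ℝ → ℝ) (hφ : ContDiff ℝ 1 φ) (hφ0 : φ 0 = 0) (R : ℝ) (hR : 0 ≤ R) :
    ∫ x in (0 : ℝ)..R, (|φ x| ^ p * (c / (1 + |x|) ^ (2 * β)) - (p / (2 * β - 1)) ^ p *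
      ((1 + |x|) ^ p * |deriv φ x| ^ p * (c / (1 + |x|) ^ (2 * β)))) ≤ 0 := by
  have hp0 : 0 < p := by linarith
  have ha : 0 < 2 * β - 1 := by linarith
  have hd : Continuous (deriv φ) := hφ.continuous_deriv le_rfl
  have hdiff : Differentiable ℝ φ := hφ.differentiable one_ne_zero
  have hcφ : Continuous φ := hφ.continuous
  set Φ : ℝ → ℝ := fun x => ∫ t in (0 : ℝ)..x, |deriv φ t| with hΦ
  have hΦd : ∀ x, HasDerivAt Φ (|deriv φ x|) x := fun x =>
    intervalIntegral.integral_hasDerivAt_right (hd.abs.intervalIntegrable _ _)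
      (hd.abs.stronglyMeasurableAtFilter _ _) hd.abs.continuousAt
  have hΦc : Continuous Φ := continuous_iff_continuousAt.2 fun x => (hΦd x).continuousAt
  have hΦ0 : Φ 0 = 0 := by simp [hΦ]
  have hφΦ : ∀ x, 0 ≤ x → |φ x| ≤ Φ x := by
    intro x hx
    have h1 : ∫ t in (0 : ℝ)..x, deriv φ t = φ x - φ 0 :=
      intervalIntegral.integral_deriv_eq_sub (fun t _ => hdiff t) (hd.intervalIntegrable _ _)
    rw [hφ0, sub_zero] at h1
    rw [← h1]
    exact intervalIntegral.abs_integral_le_integral_abs hx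
  set a := 2 * β - 1 with hadef
  have hb : 2 * β = a + 1 := by rw [hadef]; ring
  rw [hb]
  let G : ℝ → ℝ := fun x => -(p * c / a) * (Φ x ^ p * (1 + x) ^ (-a))
  have hG : ∀ x, 0 ≤ x → HasDerivAt G (-(p * c / a) * ((|deriv φ x| * p * Φ x ^ (p - 1)) *
      (1 + x) ^ (-a) + Φ x ^ p * (1 * (-a) * (1 + x) ^ (-a - 1)))) x := by
    intro x hx
    have h1 := (hΦd x).rpow_const (p := p) (Or.inr hp)
    have h2 : HasDerivAt (fun x : ℝ => 1 + x) 1 x := (hasDerivAt_id x).const_add 1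
    have h3 := h2.rpow_const (p := -a) (Or.inl (by positivity))
    exact (h1.mul h3).const_mul _
  have key := intervalIntegral.integral_le_sub_of_hasDeriv_right_of_le (g := G) hR
    (fun x hx => (hG x hx.1).continuousAt.continuousWithinAt)
    (fun x hx => (hG x hx.1.le).hasDerivWithinAt)
    (φ := fun x => |φ x| ^ p * (c / (1 + |x|) ^ (a + 1)) - (p / a) ^ p *
      ((1 + |x|) ^ p * |deriv φ x| ^ p * (c / (1 + |x|) ^ (a + 1)))) ?_ ?_
  · refine key.trans ?_
    have hGR : G R ≤ 0 := by
      have := (abs_nonneg _).trans (hφΦ R hR)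
      have h : 0 ≤ (p * c / a) * (Φ R ^ p * (1 + R) ^ (-a)) := by positivity
      simp only [G]; linarith
    have hG0 : G 0 = 0 := by simp [G, hΦ0, Real.zero_rpow hp0.ne']
    linarith
  · apply Continuous.integrableOn_Icc
    have h1 : Continuous fun x : ℝ => 1 + |x| := by fun_prop
    have hne : ∀ x : ℝ, 1 + |x| ≠ 0 := fun x => by positivity
    have hw : Continuous fun x : ℝ => c / (1 + |x|) ^ (a + 1) :=
      continuous_const.div (h1.rpow_const fun x => Or.inl (hne x)) fun x => by positivity
    exact ((hcφ.abs.rpow_const fun x => Or.inr hp0.le).mul hw).sub (continuous_const.mul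
      (((h1.rpow_const fun x => Or.inl (hne x)).mul
        (hd.abs.rpow_const fun x => Or.inr hp0.le)).mul hw))
  · intro x hx
    have hx0 : 0 ≤ x := hx.1.le
    have hA := (abs_nonneg _).trans (hφΦ x hx0)
    have h1x : 0 < 1 + x := by positivity
    have hmono : |φ x| ^ p ≤ Φ x ^ p := Real.rpow_le_rpow (abs_nonneg _) (hφΦ x hx0) hp0.le
    have hy := wsp_young p hp (Φ x) (p / a * ((1 + x) * |deriv φ x|)) hA (by positivity)
    rw [Real.mul_rpow (by positivity) (by positivity), Real.mul_rpow h1x.le (abs_nonneg _)] at hy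
    simp only [abs_of_nonneg hx0]
    set w := c / (1 + x) ^ (a + 1) with hw
    have hw0 : 0 < w := by positivity
    have e1 : (1 + x) ^ (-a - 1) * c = w := by
      rw [hw, show -a - 1 = -(a + 1) by ring, Real.rpow_neg h1x.le]; field_simp
    have e2 : (1 + x) ^ (-a) * c = (1 + x) * w := by
      rw [← e1, Real.rpow_sub h1x, Real.rpow_one]; field_simp
    have e3 : -(p * c / a) * ((|deriv φ x| * p * Φ x ^ (p - 1)) *
      (1 + x) ^ (-a) + Φ x ^ p * (1 * (-a) * (1 + x) ^ (-a - 1))) =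
      (p * Φ x ^ p - p * (Φ x ^ (p - 1) * (p / a * ((1 + x) * |deriv φ x|)))) * w := by
      calc _ = -(p / a) * ((|deriv φ x| * p * Φ x ^ (p - 1)) *
          ((1 + x) ^ (-a) * c) + Φ x ^ p * (1 * (-a) * ((1 + x) ^ (-a - 1) * c))) := by ring
        _ = _ := by rw [e1, e2]; field_simp; ring
    rw [e3]
    calc _ = (|φ x| ^ p - (p / a) ^ p * ((1 + x) ^ p * |deriv φ x| ^ p)) * w := by ring
      _ ≤ _ := by
        apply mul_le_mul_of_nonneg_right _ hw0.le
        linarith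

lemma wsp_half (β : ℝ) (hβ : 1 / 2 < β) (c : ℝ) (hc : 0 < c) (p : ℝ) (hp : 1 ≤ p)
    (φ : ℝ → ℝ) (hφ : ContDiff ℝ 1 φ) (hφ0 : φ 0 = 0)
    (hlhs : Integrable (fun x => |φ x| ^ p * (c / (1 + |x|) ^ (2 * β))))
    (hrhs : Integrable (fun x =>
      (1 + |x|) ^ p * |deriv φ x| ^ p * (c / (1 + |x|) ^ (2 * β)))) :
    (∫ x in Ioi (0 : ℝ), |φ x| ^ p * (c / (1 + |x|) ^ (2 * β)))
      ≤ (p / (2 * β - 1)) ^ p *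
          ∫ x in Ioi (0 : ℝ), (1 + |x|) ^ p * |deriv φ x| ^ p * (c / (1 + |x|) ^ (2 * β)) := by
  have hr := hrhs.const_mul ((p / (2 * β - 1)) ^ p)
  have ht := intervalIntegral_tendsto_integral_Ioi 0 (hlhs.sub hr).integrableOn Filter.tendsto_id
  have h := le_of_tendsto ht ((Filter.eventually_ge_atTop 0).mono fun R hR =>
    wsp_fin β hβ c hc p hp φ hφ hφ0 R hR)
  simp only [Pi.sub_apply] at h
  rw [integral_sub hlhs.integrableOn hr.integrableOn, integral_const_mul] at h
  linarith


/-- **Sharp Wirtinger inequality for the density `g_β`, functions vanishing at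
the median** (inequality (4.14)). Let `β > 1/2` and let `Y` have the density
`g_β(x) = c_β/(1+|x|)^{2β}` on `ℝ`. Then for every `1 ≤ p < ∞` and every smooth
`φ` with `φ(0) = 0` and `E[|φ(Y)|^p]` finite,
`E[|φ(Y)|^p] ≤ (p/(2β−1))^p E[(1+|Y|)^p |φ'(Y)|^p]`
(whenever the right-hand side is finite). -/
theorem wirtinger_symmetric_pareto
    (β : ℝ) (hβ : 1 / 2 < β)
    (c : ℝ) (hc : 0 < c)
    (hnorm : ∫ x : ℝ, c / (1 + |x|) ^ (2 * β) = 1)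
    (p : ℝ) (hp : 1 ≤ p)
    (φ : ℝ → ℝ) (hφ : ContDiff ℝ (⊤ : ℕ∞) φ) (hφ0 : φ 0 = 0)
    (hlhs : Integrable (fun x => |φ x| ^ p * (c / (1 + |x|) ^ (2 * β))))
    (hrhs : Integrable (fun x =>
      (1 + |x|) ^ p * |deriv φ x| ^ p * (c / (1 + |x|) ^ (2 * β)))) :
    (∫ x : ℝ, |φ x| ^ p * (c / (1 + |x|) ^ (2 * β)))
      ≤ (p / (2 * β - 1)) ^ p *
          ∫ x : ℝ, (1 + |x|) ^ p * |deriv φ x| ^ p * (c / (1 + |x|) ^ (2 * β)) := by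
  have hφ1 : ContDiff ℝ 1 φ := hφ.of_le (by exact_mod_cast le_top)
  have h1 := wsp_half β hβ c hc p hp φ hφ1 hφ0 hlhs hrhs
  have h2 := wsp_half β hβ c hc p hp (fun x => φ (-x)) (hφ1.comp contDiff_neg) (by simpa using hφ0)
    (by simpa using hlhs.comp_neg) (by simpa [deriv_comp_neg] using hrhs.comp_neg)
  have e1 := integral_comp_neg_Ioi 0 (fun x => |φ x| ^ p * (c / (1 + |x|) ^ (2 * β)))
  have e2 := integral_comp_neg_Ioi 0
    (fun x => (1 + |x|) ^ p * |deriv φ x| ^ p * (c / (1 + |x|) ^ (2 * β)))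
  simp only [abs_neg, neg_zero] at e1 e2
  simp only [deriv_comp_neg, abs_neg] at h2
  rw [e1, e2] at h2
  rw [← intervalIntegral.integral_Iic_add_Ioi (b := 0) hlhs.integrableOn hlhs.integrableOn,
    ← intervalIntegral.integral_Iic_add_Ioi (b := 0) hrhs.integrableOn hrhs.integrableOn, mul_add]
  exact add_le_add h2 h1
end

section
/- Let β > 1/2, m > 0, let h_{β,m}(x) = C_{β,m} x^{−2β} e^{−m/x} be the inverse Gamma density on ℝ₊ with distribution function H_{β,m}(x) = ∫_0^x h_{β,m}(y) dy, and let x̄ = x̄_{β,m} be its median. Then for every 0 < x ≤ x̄, H_{β,m}(x)/h_{β,m}(x) ≤ x · (1/2)(x̄ · h_{β,m}(x̄))^{−1}, and for every x ≥ x̄, (1 − H_{β,m}(x))/h_{β,m}(x) ≤ x · (1/2)(x̄ · h_{β,m}(x̄))^{−1}. -/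
open MeasureTheory Set

/-- **Bounds on the Wirtinger weight of the inverse Gamma density**
(estimates (4.17)–(4.19)). Let `β > 1/2`, `m > 0`, let
`h_{β,m}(x) = C_{β,m} x^{−2β} e^{−m/x}` be the inverse Gamma density on `ℝ₊`
with distribution function `H_{β,m}(x) = ∫_0^x h_{β,m}` and median `xbar`
(`H_{β,m}(xbar) = 1/2`). Then for every `0 < x ≤ xbar`,
`H_{β,m}(x)/h_{β,m}(x) ≤ x · (1/2)(xbar · h_{β,m}(xbar))⁻¹`, and for every
`x ≥ xbar`, `(1 − H_{β,m}(x))/h_{β,m}(x) ≤ x · (1/2)(xbar · h_{β,m}(xbar))⁻¹`. -/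
theorem inverse_gamma_wirtinger_weight_bounds
    (β m : ℝ) (hβ : 1 / 2 < β) (hm : 0 < m)
    (C : ℝ) (hC : 0 < C)
    (h : ℝ → ℝ) (hdef : ∀ x, h x = C * x ^ (-(2 * β)) * Real.exp (-m / x))
    (hnorm : ∫ x in Ioi (0 : ℝ), h x = 1)
    (H : ℝ → ℝ) (hH : ∀ x, H x = ∫ y in Ioo (0 : ℝ) x, h y)
    (xbar : ℝ) (hxbar : 0 < xbar) (hmedian : H xbar = 1 / 2) :
    (∀ x : ℝ, 0 < x → x ≤ xbar →
        H x / h x ≤ x * (1 / 2) * (xbar * h xbar)⁻¹) ∧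
      (∀ x : ℝ, xbar ≤ x →
        (1 - H x) / h x ≤ x * (1 / 2) * (xbar * h xbar)⁻¹) := by
  have key : ∀ x b t : ℝ, 0 < x → 0 < b → 0 < t → 0 ≤ (1 - t) * (b - x) →
      h (x * t) * h b ≤ h (b * t) * h x := by
    intro x b t hx hb ht hs
    simp only [hdef]
    rw [Real.mul_rpow hx.le ht.le, Real.mul_rpow hb.le ht.le]
    have e : Real.exp (-m / (x * t)) * Real.exp (-m / b)
        ≤ Real.exp (-m / (b * t)) * Real.exp (-m / x) := by
      rw [← Real.exp_add, ← Real.exp_add]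
      apply Real.exp_le_exp.mpr
      have : -m / (b * t) + -m / x - (-m / (x * t) + -m / b)
          = m * ((1 - t) * (b - x)) / (x * b * t) := by
        field_simp
        ring
      have h2 : 0 ≤ m * ((1 - t) * (b - x)) / (x * b * t) := by positivity
      linarith
    have p : 0 ≤ C * C * (x ^ (-(2 * β)) * t ^ (-(2 * β)) * b ^ (-(2 * β))) := by positivity
    have := mul_le_mul_of_nonneg_left e p
    nlinarith [this]
  have hpos : ∀ x, 0 < x → 0 < h x := by
    intro x hx
    rw [hdef]
    positivity
  have hint : IntegrableOn h (Ioi 0) := by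
    by_contra hc
    rw [integral_undef hc] at hnorm
    exact zero_ne_one hnorm
  have hsc : ∀ x, 0 < x → IntegrableOn (fun t => h (x * t)) (Ioi 0) := by
    intro x hx
    have := (integrableOn_Ioi_comp_mul_left_iff h 0 hx).mpr (by simpa using hint)
    exact this
  have hHs : ∀ x, 0 < x → H x = x * ∫ t in Ioo (0:ℝ) 1, h (x * t) := by
    intro x hx
    rw [hH, ← integral_Ioc_eq_integral_Ioo, ← integral_Ioc_eq_integral_Ioo,
      ← intervalIntegral.integral_of_le hx.le, ← intervalIntegral.integral_of_le zero_le_one,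
      intervalIntegral.integral_comp_mul_left _ hx.ne']
    simp [hx.ne']
  have hTs : ∀ x, 0 < x → 1 - H x = x * ∫ t in Ioi (1:ℝ), h (x * t) := by
    intro x hx
    have h1 : ∫ t in Ioi (1:ℝ), h (x * t) = x⁻¹ * ∫ t in Ioi x, h t := by
      have := integral_comp_mul_left_Ioi h 1 hx
      simpa using this
    have h2 : ∫ t in Ioi (0:ℝ), h t = (∫ t in Ioc 0 x, h t) + ∫ t in Ioi x, h t := by
      rw [← Ioc_union_Ioi_eq_Ioi hx.le]
      exact setIntegral_union Ioc_disjoint_Ioi_same measurableSet_Ioi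
        (hint.mono_set Ioc_subset_Ioi_self) (hint.mono_set (Ioi_subset_Ioi hx.le))
    rw [h1, hH, ← integral_Ioc_eq_integral_Ioo, ← hnorm, h2]
    field_simp
    ring
  have fin : ∀ (S : Set ℝ) (x : ℝ), MeasurableSet S → S ⊆ Ioi 0 → 0 < x →
      (∀ t ∈ S, 0 ≤ (1 - t) * (xbar - x)) →
      xbar * (∫ t in S, h (xbar * t)) = 1 / 2 →
      (x * ∫ t in S, h (x * t)) / h x ≤ x * (1 / 2) * (xbar * h xbar)⁻¹ := by
    intro S x hS hsub hx hs hhalf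
    have hi : (∫ t in S, h (x * t)) * h xbar ≤ (∫ t in S, h (xbar * t)) * h x := by
      rw [← integral_mul_const, ← integral_mul_const]
      exact setIntegral_mono_on (((hsc x hx).mono_set hsub).mul_const _)
        (((hsc xbar hxbar).mono_set hsub).mul_const _) hS
        (fun t ht => key x xbar t hx hxbar (hsub ht) (hs t ht))
    have a := hpos x hx
    have b := hpos xbar hxbar
    rw [← hhalf, ← div_eq_mul_inv, div_le_div_iff₀ a (by positivity)]
    have := mul_le_mul_of_nonneg_left hi (mul_pos hx hxbar).le
    linarith
  constructor
  · intro x hx hxb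
    rw [hHs x hx]
    refine fin _ x measurableSet_Ioo Ioo_subset_Ioi_self hx ?_ ?_
    · intro t ht
      exact mul_nonneg (by linarith [ht.2]) (by linarith)
    · rw [← hHs xbar hxbar, hmedian]
  · intro x hxb
    have hx : 0 < x := lt_of_lt_of_le hxbar hxb
    rw [hTs x hx]
    refine fin _ x measurableSet_Ioi (Ioi_subset_Ioi zero_le_one) hx ?_ ?_
    · intro t ht
      have : (1:ℝ) < t := ht
      exact mul_nonneg_of_nonpos_of_nonpos (by linarith) (by linarith)
    · rw [← hTs xbar hxbar, hmedian]
      norm_num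
end

section
/- Let 1 < α ≤ 3/2 and define z(x) = (1 + (α−1)x²)/(1+x²)^{2−α} for x ∈ ℝ. Then z attains its minimum over ℝ at x̄ = ±√(3−2α)/(α−1) when 1 < α < 3/2 (and at x̄ = 0 when α = 3/2), and consequently z(x) ≥ ((α−1)/(2−α))^{3−2α} for all x ∈ ℝ; moreover for α ≥ 3/2 (with α ≤ 2) one has z(x) ≥ 1 for all x ∈ ℝ. -/
open Real

/-- The even rational function `z(x) = (1 + (α−1)x²)/(1+x²)^{2−α}` arising as
the `x`-dependent factor of `W''(y) = α(1+2λ) z(x(y))` in the Bakry–Émery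
analysis of the Cauchy-type Fokker–Planck equation. -/
noncomputable def zfun (α x : ℝ) : ℝ :=
  (1 + (α - 1) * x ^ 2) / (1 + x ^ 2) ^ (2 - α)

theorem zfun_aux_one (α : ℝ) (hα1 : 3 / 2 ≤ α) (hα2 : α ≤ 2) (x : ℝ) : 1 ≤ zfun α x := by
  unfold zfun
  have h0 : (0:ℝ) < (1 + x ^ 2) ^ (2 - α) := Real.rpow_pos_of_pos (by positivity) _
  rw [le_div_iff₀ h0, one_mul]
  have h := rpow_one_add_le_one_add_mul_self (s := x ^ 2) (p := 2 - α)
    (by nlinarith [sq_nonneg x]) (by linarith) (by linarith)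
  nlinarith [sq_nonneg x]

theorem zfun_aux_bd (α : ℝ) (hα1 : 1 < α) (hα2 : α < 2) (x : ℝ) :
    ((α - 1) / (2 - α)) ^ (3 - 2 * α) ≤ zfun α x := by
  unfold zfun
  have hb : 0 < α - 1 := by linarith
  have hp : 0 < 2 - α := by linarith
  have ht : 0 < 1 + x ^ 2 := by positivity
  have h0 : (0:ℝ) < (1 + x ^ 2) ^ (2 - α) := Real.rpow_pos_of_pos ht _
  rw [le_div_iff₀ h0]
  set r := (α - 1) / (2 - α) with hr
  have hr0 : 0 < r := div_pos hb hp
  have h := rpow_one_add_le_one_add_mul_self (s := r ^ 2 * (1 + x ^ 2) - 1) (p := 2 - α)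
    (by nlinarith [mul_pos (pow_pos hr0 2) ht]) (by linarith) (by linarith)
  rw [add_sub_cancel, Real.mul_rpow (by positivity) ht.le, ← Real.rpow_natCast r 2,
    ← Real.rpow_mul hr0.le] at h
  have e : r ^ (((2:ℕ):ℝ) * (2 - α)) = r ^ (3 - 2 * α) * r := by
    rw [← Real.rpow_add_one hr0.ne']; congr 1; push_cast; ring
  rw [e, Real.rpow_natCast] at h
  have e2 : 1 + (2 - α) * (r ^ 2 * (1 + x ^ 2) - 1) = r * (1 + (α - 1) * x ^ 2) := by
    rw [hr]; field_simp; ring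
  rw [e2] at h
  refine le_of_mul_le_mul_left ?_ hr0
  linarith

theorem zfun_aux_eq (α : ℝ) (hα1 : 1 < α) (hα2 : α < 3 / 2) (y : ℝ)
    (hy : y ^ 2 = (3 - 2 * α) / (α - 1) ^ 2) :
    zfun α y = ((α - 1) / (2 - α)) ^ (3 - 2 * α) := by
  unfold zfun
  have hb : 0 < α - 1 := by linarith
  have hp : 0 < 2 - α := by linarith
  set r := (α - 1) / (2 - α) with hr
  have hr0 : 0 < r := div_pos hb hp
  have e1 : 1 + (α - 1) * y ^ 2 = r⁻¹ := by rw [hy, hr]; field_simp; ring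
  have e2 : 1 + y ^ 2 = (r⁻¹) ^ 2 := by rw [hy, hr]; field_simp; ring
  rw [e1, e2, ← Real.rpow_natCast, ← Real.rpow_mul (by positivity), Real.inv_rpow hr0.le,
    div_inv_eq_mul, mul_comm, ← div_eq_mul_inv, ← Real.rpow_sub_one hr0.ne']
  congr 1; push_cast; ring

/-- **Lower bound for the convexity factor `z`** (minimization of `z` in the
proof of Theorem 3.1). Let `1 < α ≤ 2` and `z(x) = (1+(α−1)x²)/(1+x²)^{2−α}`.
If `1 < α < 3/2` then `z` attains its minimum over `ℝ` at
`x = ±√(3−2α)/(α−1)`, while for `α = 3/2` it attains its minimum at `x = 0`;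
consequently, for `1 < α ≤ 3/2`, `z(x) ≥ ((α−1)/(2−α))^{3−2α}` for all `x ∈ ℝ`.
Moreover, for `3/2 ≤ α ≤ 2`, `z(x) ≥ 1` for all `x ∈ ℝ`. -/
theorem zfun_lower_bounds (α : ℝ) (hα1 : 1 < α) (hα2 : α ≤ 2) :
    (α < 3 / 2 →
        ∀ x : ℝ, zfun α (Real.sqrt (3 - 2 * α) / (α - 1)) ≤ zfun α x ∧
          zfun α (-(Real.sqrt (3 - 2 * α) / (α - 1))) ≤ zfun α x) ∧
      (α = 3 / 2 → ∀ x : ℝ, zfun α 0 ≤ zfun α x) ∧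
      (α ≤ 3 / 2 → ∀ x : ℝ, ((α - 1) / (2 - α)) ^ (3 - 2 * α) ≤ zfun α x) ∧
      (3 / 2 ≤ α → ∀ x : ℝ, 1 ≤ zfun α x) := by
  have hsq : α < 3 / 2 → (Real.sqrt (3 - 2 * α) / (α - 1)) ^ 2 = (3 - 2 * α) / (α - 1) ^ 2 := by
    intro h
    rw [div_pow, Real.sq_sqrt (by linarith)]
  refine ⟨fun h x => ⟨?_, ?_⟩, fun h x => ?_, fun h x => ?_, fun h x => ?_⟩
  · rw [zfun_aux_eq α hα1 h _ (hsq h)]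
    exact zfun_aux_bd α hα1 (by linarith) x
  · rw [zfun_aux_eq α hα1 h _ (by rw [neg_sq]; exact hsq h)]
    exact zfun_aux_bd α hα1 (by linarith) x
  · have : zfun α 0 = 1 := by simp [zfun]
    rw [this]
    exact zfun_aux_one α h.ge hα2 x
  · exact zfun_aux_bd α hα1 (by linarith) x
  · exact zfun_aux_one α h hα2 x
end
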